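/- arXiv:1504.03026 — 5 statements merged into one kernel-verified Lean document; each statement's English description precedes it below -/
import Mathlib

section
/- For any graph function α and any vertex v, the momentum satisfies m_v ≤ ρ(S_v) + z_v. -/
open Filter Topology

variable {V : Type*}

/-- Maximum weight of an edge leaving `v` (as a supremum over the finite edge set). -/
noncomputable def outMax (E : V → V → Prop) (α : V → V → ℝ) (v : V) : ℝ :=
  sSup {x : ℝ | ∃ w, E v w ∧ x = α v w}

/-- Maximum weight of an edge entering `v`. -/
noncomputable def inMax (E : V → V → Prop) (α : V → V → ℝ) (v : V) : ℝ :=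
  sSup {x : ℝ | ∃ u, E u v ∧ x = α u v}

/-- A graph function is balanced if the max outgoing weight equals the max incoming
weight at every vertex. -/
def IsBalancedGF (E : V → V → Prop) (α : V → V → ℝ) : Prop :=
  ∀ v, outMax E α v = inMax E α v

/-- Raising imbalance at `v`. -/
noncomputable def rhoR (E : V → V → Prop) (α : V → V → ℝ) (v : V) : ℝ :=
  max 0 (outMax E α v - inMax E α v)

/-- Lowering imbalance at `v`. -/
noncomputable def rhoL (E : V → V → Prop) (α : V → V → ℝ) (v : V) : ℝ :=
  max 0 (inMax E α v - outMax E α v)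

/-- A balancing operation at `v`: add `(α_v^out − α_v^in)/2` to every edge entering `v`
and subtract the same quantity from every edge leaving `v` (a self-loop is unchanged). -/
noncomputable def balanceAt [DecidableEq V] (E : V → V → Prop) (α : V → V → ℝ) (v : V) :
    V → V → ℝ :=
  fun a b =>
    α a b + (if b = v then (outMax E α v - inMax E α v) / 2 else 0)
          - (if a = v then (outMax E α v - inMax E α v) / 2 else 0)

/-- A raising operation at `v`: balance at `v` if the raising imbalance is positive,
otherwise do nothing. -/
noncomputable def raiseOp [DecidableEq V] (E : V → V → Prop) (α : V → V → ℝ) (v : V) :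
    V → V → ℝ :=
  if 0 < rhoR E α v then balanceAt E α v else α

/-- A lowering operation at `v`: balance at `v` if the lowering imbalance is positive,
otherwise do nothing. -/
noncomputable def lowerOp [DecidableEq V] (E : V → V → Prop) (α : V → V → ℝ) (v : V) :
    V → V → ℝ :=
  if 0 < rhoL E α v then balanceAt E α v else α

/-- A sequence of vertices is fair if every vertex appears infinitely often. -/
def Fair (σ : ℕ → V) : Prop := ∀ (v : V) (N : ℕ), ∃ t, N ≤ t ∧ σ t = v

/-- State after `t` raising operations along the sequence `σ`. -/
noncomputable def raiseIter [DecidableEq V] (E : V → V → Prop) (α : V → V → ℝ)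
    (σ : ℕ → V) : ℕ → V → V → ℝ
  | 0 => α
  | t + 1 => raiseOp E (raiseIter E α σ t) (σ t)

/-- State after `t` lowering operations along the sequence `σ`. -/
noncomputable def lowerIter [DecidableEq V] (E : V → V → Prop) (α : V → V → ℝ)
    (σ : ℕ → V) : ℕ → V → V → ℝ
  | 0 => α
  | t + 1 => lowerOp E (lowerIter E α σ t) (σ t)

/-- The raising vector: cumulative amount by which each vertex has been raised after
`t` raising operations along `σ`. -/
noncomputable def rvec [DecidableEq V] (E : V → V → Prop) (α : V → V → ℝ)
    (σ : ℕ → V) : ℕ → V → ℝ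
  | 0 => fun _ => 0
  | t + 1 => fun u =>
      rvec E α σ t u + (if u = σ t then rhoR E (raiseIter E α σ t) (σ t) / 2 else 0)

/-- State after performing raising operations along a finite list of vertices. -/
noncomputable def raiseList [DecidableEq V] (E : V → V → Prop) :
    (V → V → ℝ) → List V → V → V → ℝ
  | α, [] => α
  | α, v :: l => raiseList E (raiseOp E α v) l

/-- Raising vector accumulated along a finite list of raising operations. -/
noncomputable def rvecList [DecidableEq V] (E : V → V → Prop) :
    (V → V → ℝ) → List V → V → ℝ
  | _, [] => fun _ => 0
  | α, v :: l => fun u =>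
      (if u = v then rhoR E α v / 2 else 0) + rvecList E (raiseOp E α v) l u

/-- State after performing (unconditional) balancing operations along a list. -/
noncomputable def balList [DecidableEq V] (E : V → V → Prop) :
    (V → V → ℝ) → List V → V → V → ℝ
  | α, [] => α
  | α, v :: l => balList E (balanceAt E α v) l

/-- State after `t` balancing operations along the sequence `σ`. -/
noncomputable def balIter [DecidableEq V] (E : V → V → Prop) (α : V → V → ℝ)
    (σ : ℕ → V) : ℕ → V → V → ℝ
  | 0 => α
  | t + 1 => balanceAt E (balIter E α σ t) (σ t)

/-- Two graph functions are equivalent if their sums around every directed cycle agree. -/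
def Equivalent (E : V → V → Prop) (α γ : V → V → ℝ) : Prop :=
  ∀ (k : ℕ) (f : ZMod (k + 1) → V), (∀ i, E (f i) (f (i + 1))) →
    (∑ i, α (f i) (f (i + 1))) = ∑ i, γ (f i) (f (i + 1))

/-- The raising-balanced graph function determined by the limiting raising vector. -/
noncomputable def alphaR (α : V → V → ℝ) (rstar : V → ℝ) : V → V → ℝ :=
  fun u v => α u v + rstar v - rstar u

/-- Height of a vertex: `y_v = -r*_v`. -/
noncomputable def height (rstar : V → ℝ) (v : V) : ℝ := -rstar v

/-- Level of a vertex: maximum over incoming edges of `α^R`. -/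
noncomputable def level (E : V → V → Prop) (α : V → V → ℝ) (rstar : V → ℝ) (v : V) : ℝ :=
  inMax E (alphaR α rstar) v

/-- Momentum of a vertex: `m_v = max over edges (u,v) entering v of (α_{uv} − x_v)`. -/
noncomputable def momentum (E : V → V → Prop) (α : V → V → ℝ) (rstar : V → ℝ) (v : V) : ℝ :=
  sSup {c : ℝ | ∃ u, E u v ∧ c = α u v - level E α rstar v}

theorem bdd_aux [Finite V] (P : V → Prop) (f : V → ℝ) :
    BddAbove {c : ℝ | ∃ u, P u ∧ c = f u} := by
  refine ((Set.finite_range f).subset ?_).bddAbove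
  rintro c ⟨u, _, rfl⟩
  exact ⟨u, rfl⟩

open scoped Classical in
theorem edge_aux [Fintype V] (E : V → V → Prop)
    (hin : ∀ v, ∃ u, E u v) (α : V → V → ℝ) (rstar : V → ℝ) (n : ℕ) :
    ∀ v, (Finset.univ.filter fun u => height rstar u < height rstar v).card < n →
      ∀ u, E u v → α u v ≤
      (∑ u ∈ Finset.univ.filter fun u => height rstar u < height rstar v,
        rhoR E α u) +
      sSup {c : ℝ | ∃ u, height rstar u ≤ height rstar v ∧
          c = level E α rstar u} := by
  induction n with
  | zero => intro v h; omega
  | succ n ih =>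
    intro v hv u huv
    have hnn : ∀ w, 0 ≤ rhoR E α w := fun w => le_max_left _ _
    by_cases hy : height rstar u < height rstar v
    · have hout : α u v ≤ outMax E α u :=
        le_csSup (bdd_aux (fun w => E u w) (fun w => α u w)) ⟨v, huv, rfl⟩
      have hrho : outMax E α u - inMax E α u ≤ rhoR E α u := le_max_right _ _
      have hnot : u ∉ Finset.univ.filter fun w => height rstar w < height rstar u := by simp
      have hsub : insert u (Finset.univ.filter fun w => height rstar w < height rstar u) ⊆
          Finset.univ.filter fun w => height rstar w < height rstar v := by
        intro w hw
        simp only [Finset.mem_insert, Finset.mem_filter, Finset.mem_univ, true_and] at hw ⊢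
        rcases hw with rfl | hw
        · exact hy
        · exact hw.trans hy
      have hcard := Finset.card_le_card hsub
      rw [Finset.card_insert_of_notMem hnot] at hcard
      have hsum := Finset.sum_le_sum_of_subset_of_nonneg (f := rhoR E α) hsub
        (fun i _ _ => hnn i)
      rw [Finset.sum_insert hnot] at hsum
      have hM : sSup {c : ℝ | ∃ w, height rstar w ≤ height rstar u ∧
          c = level E α rstar w} ≤ sSup {c : ℝ | ∃ w, height rstar w ≤ height rstar v ∧
          c = level E α rstar w} := by
        refine csSup_le_csSup (bdd_aux _ _) ⟨_, u, le_rfl, rfl⟩ ?_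
        rintro c ⟨w, hw, rfl⟩
        exact ⟨w, hw.trans hy.le, rfl⟩
      have hi : inMax E α u ≤ (∑ w ∈ Finset.univ.filter fun w => height rstar w < height rstar u,
          rhoR E α w) + sSup {c : ℝ | ∃ w, height rstar w ≤ height rstar u ∧
          c = level E α rstar w} := by
        obtain ⟨w0, hw0⟩ := hin u
        refine csSup_le ⟨_, w0, hw0, rfl⟩ ?_
        rintro c ⟨w, hw, rfl⟩
        exact ih u (by omega) w hw
      linarith
    · have h1 : alphaR α rstar u v ≤ level E α rstar v :=
        le_csSup (bdd_aux (fun w => E w v) (fun w => alphaR α rstar w v)) ⟨u, huv, rfl⟩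
      have h2 : level E α rstar v ≤ sSup {c : ℝ | ∃ u, height rstar u ≤ height rstar v ∧
          c = level E α rstar u} :=
        le_csSup (bdd_aux _ _) ⟨v, le_rfl, rfl⟩
      have h3 : 0 ≤ ∑ u ∈ Finset.univ.filter fun u => height rstar u < height rstar v,
        rhoR E α u := Finset.sum_nonneg (fun i _ => hnn i)
      simp only [height, alphaR] at hy h1
      linarith

open scoped Classical in
/-- `m_v ≤ ρ(S_v) + z_v`, where `S_v = {u : y_u < y_v}`,
`ρ(S_v) = ∑_{u ∈ S_v} ρ_u^R` and `z_v = max{x_u : y_u ≤ y_v} − x_v`. -/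
theorem momentum_global_bound
    [Fintype V] [Nonempty V] [DecidableEq V] (E : V → V → Prop)
    (hout : ∀ v, ∃ w, E v w) (hin : ∀ v, ∃ u, E u v)
    (hconn : ∀ u v : V, Relation.ReflTransGen E u v)
    (α : V → V → ℝ) (rstar : V → ℝ)
    (hrstar : ∀ σ : ℕ → V, Fair σ → ∀ v,
      Tendsto (fun t => rvec E α σ t v) atTop (nhds (rstar v)))
    (v : V) :
    momentum E α rstar v ≤
      (∑ u ∈ Finset.univ.filter fun u => height rstar u < height rstar v,
        rhoR E α u) +
      (sSup {c : ℝ | ∃ u, height rstar u ≤ height rstar v ∧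
          c = level E α rstar u} -
        level E α rstar v) := by
  obtain ⟨w0, hw0⟩ := hin v
  refine csSup_le ⟨_, w0, hw0, rfl⟩ ?_
  rintro c ⟨w, hw, rfl⟩
  have := edge_aux E hin α rstar _ v (Nat.lt_succ_self _) w hw
  linarith
end

section
/- For any graph function α and any vertex v, the heights satisfy y_v − y_min ≤ |S_v| · ρ(S_v), where y_min = min_u y_u. -/
open Filter Topology

variable {V : Type*}

section Helpers

variable [Fintype V]

lemma hgb_le_out (E : V → V → Prop) (a : V → V → ℝ) {v w : V} (h : E v w) :
    a v w ≤ outMax E a v := by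
  apply le_csSup
  · apply Set.Finite.bddAbove
    apply (Set.finite_range (fun w => a v w)).subset
    rintro x ⟨w, _, rfl⟩
    exact ⟨w, rfl⟩
  · exact ⟨w, h, rfl⟩

lemma hgb_le_in (E : V → V → Prop) (a : V → V → ℝ) {u v : V} (h : E u v) :
    a u v ≤ inMax E a v := by
  apply le_csSup
  · apply Set.Finite.bddAbove
    apply (Set.finite_range (fun w => a w v)).subset
    rintro x ⟨w, _, rfl⟩
    exact ⟨w, rfl⟩
  · exact ⟨u, h, rfl⟩

lemma hgb_ex_out (E : V → V → Prop) (hout : ∀ v, ∃ w, E v w) (a : V → V → ℝ) (v : V) :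
    ∃ w, E v w ∧ outMax E a v = a v w := by
  have hf : {x : ℝ | ∃ w, E v w ∧ x = a v w}.Finite := by
    apply (Set.finite_range (fun w => a v w)).subset
    rintro x ⟨w, _, rfl⟩
    exact ⟨w, rfl⟩
  have hn : {x : ℝ | ∃ w, E v w ∧ x = a v w}.Nonempty := by
    obtain ⟨w, hw⟩ := hout v
    exact ⟨_, w, hw, rfl⟩
  exact hn.csSup_mem hf

lemma hgb_ex_in (E : V → V → Prop) (hin : ∀ v, ∃ u, E u v) (a : V → V → ℝ) (v : V) :
    ∃ u, E u v ∧ inMax E a v = a u v := by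
  have hf : {x : ℝ | ∃ u, E u v ∧ x = a u v}.Finite := by
    apply (Set.finite_range (fun w => a w v)).subset
    rintro x ⟨w, _, rfl⟩
    exact ⟨w, rfl⟩
  have hn : {x : ℝ | ∃ u, E u v ∧ x = a u v}.Nonempty := by
    obtain ⟨w, hw⟩ := hin v
    exact ⟨_, w, hw, rfl⟩
  exact hn.csSup_mem hf

variable [DecidableEq V]

lemma hgb_iter (E : V → V → Prop) (a : V → V → ℝ) (σ : ℕ → V) (t : ℕ) :
    raiseIter E a σ t = alphaR a (rvec E a σ t) := by
  induction t with
  | zero => funext u v; simp [raiseIter, alphaR, rvec]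
  | succ t ih =>
    funext u v
    rw [raiseIter, raiseOp]
    have hr : ∀ u, rvec E a σ (t+1) u =
      rvec E a σ t u + (if u = σ t then rhoR E (raiseIter E a σ t) (σ t) / 2 else 0) :=
      fun u => rfl
    have hu : raiseIter E a σ t u v = a u v + rvec E a σ t v - rvec E a σ t u := by
      rw [ih]; rfl
    rw [alphaR, hr, hr]
    by_cases h : 0 < rhoR E (raiseIter E a σ t) (σ t)
    · rw [if_pos h, balanceAt, hu]
      have : rhoR E (raiseIter E a σ t) (σ t) =
          outMax E (raiseIter E a σ t) (σ t) - inMax E (raiseIter E a σ t) (σ t) := by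
        unfold rhoR at h ⊢
        apply max_eq_right
        by_contra h'
        push Not at h'
        rw [max_eq_left h'.le] at h
        exact lt_irrefl _ h
      rw [this]
      ring
    · rw [if_neg h, hu]
      have : rhoR E (raiseIter E a σ t) (σ t) = 0 :=
        le_antisymm (not_lt.1 h) (le_max_left _ _)
      rw [this]
      simp

lemma hgb_min (E : V → V → Prop) (hout : ∀ v, ∃ w, E v w) (a : V → V → ℝ) (σ : ℕ → V)
    (r : V → ℝ) (hr0 : ∀ v, 0 ≤ r v)
    (hr : ∀ v w, E v w → ∃ u, E u v ∧ alphaR a r v w ≤ alphaR a r u v) (t : ℕ) :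
    ∀ v, rvec E a σ t v ≤ r v := by
  induction t with
  | zero => intro v; exact hr0 v
  | succ t ih =>
    intro v
    change rvec E a σ t v + (if v = σ t then rhoR E (raiseIter E a σ t) (σ t) / 2 else 0) ≤ _
    split_ifs with h
    · rw [← h, hgb_iter]
      obtain ⟨w, hw, hw'⟩ := hgb_ex_out E hout (alphaR a (rvec E a σ t)) v
      obtain ⟨u, hu, hu'⟩ := hr v w hw
      have h1 := hgb_le_in E (alphaR a (rvec E a σ t)) hu
      have := ih u
      have := ih v
      have := ih w
      have : rhoR E (alphaR a (rvec E a σ t)) v ≤ 2 * (r v - rvec E a σ t v) := by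
        unfold rhoR
        apply max_le
        · linarith
        · rw [hw']
          simp only [alphaR] at *
          linarith
      linarith
    · simpa using ih v

lemma hgb_fair [Nonempty V] : ∃ σ : ℕ → V, Fair σ := by
  have hc : 0 < Fintype.card V := Fintype.card_pos
  let e := Fintype.equivFin V
  refine ⟨fun t => e.symm ⟨t % Fintype.card V, Nat.mod_lt _ hc⟩, ?_⟩
  intro v N
  refine ⟨(e v).1 + Fintype.card V * N, ?_, ?_⟩
  · nlinarith
  · rw [Equiv.symm_apply_eq]
    ext
    simp [Nat.mod_eq_of_lt]

lemma hgb_nonneg (E : V → V → Prop) (a : V → V → ℝ) (σ : ℕ → V) (t : ℕ) (v : V) :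
    0 ≤ rvec E a σ t v := by
  induction t with
  | zero => exact le_refl _
  | succ t ih =>
    change 0 ≤ rvec E a σ t v + (if v = σ t then rhoR E (raiseIter E a σ t) (σ t) / 2 else 0)
    have : 0 ≤ rhoR E (raiseIter E a σ t) (σ t) := le_max_left _ _
    split_ifs <;> linarith

lemma hgb_bal (E : V → V → Prop) (hin : ∀ v, ∃ u, E u v) (a : V → V → ℝ)
    (σ : ℕ → V) (hσ : Fair σ) (r : V → ℝ)
    (hlim : ∀ v, Tendsto (fun t => rvec E a σ t v) atTop (nhds (r v)))
    (v w : V) (hvw : E v w) : alphaR a r v w ≤ inMax E (alphaR a r) v := by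
  by_contra hcon
  push Not at hcon
  set δ := alphaR a r v w - inMax E (alphaR a r) v with hδ
  have hδ0 : 0 < δ := by linarith
  have hev : ∀ᶠ t in atTop, ∀ u, |rvec E a σ t u - r u| < δ / 16 := by
    rw [Filter.eventually_all]
    intro u
    have := (Metric.tendsto_nhds.1 (hlim u)) (δ / 16) (by linarith)
    simpa [Real.dist_eq] using this
  obtain ⟨N, hN⟩ := Filter.eventually_atTop.1 hev
  obtain ⟨t, ht, hv⟩ := hσ v N
  have h1 := hN t ht
  have h2 := hN (t+1) (by omega) v
  have e : rvec E a σ (t+1) v = rvec E a σ t v + rhoR E (alphaR a (rvec E a σ t)) v / 2 := by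
    change rvec E a σ t v + (if v = σ t then rhoR E (raiseIter E a σ t) (σ t) / 2 else 0) = _
    rw [if_pos hv.symm, hv, hgb_iter]
  obtain ⟨u, hu, hu'⟩ := hgb_ex_in E hin (alphaR a (rvec E a σ t)) v
  have h3 := hgb_le_out E (alphaR a (rvec E a σ t)) hvw
  have h4 := hgb_le_in E (alphaR a r) hu
  have h5 : outMax E (alphaR a (rvec E a σ t)) v - inMax E (alphaR a (rvec E a σ t)) v
      ≤ rhoR E (alphaR a (rvec E a σ t)) v := le_max_right _ _
  have hu1 := abs_lt.1 (h1 u)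
  have hv1 := abs_lt.1 (h1 v)
  have hw1 := abs_lt.1 (h1 w)
  have h2 := abs_lt.1 h2
  rw [hu'] at h5
  simp only [alphaR] at h3 h4 h5 hδ
  linarith [hu1.1, hu1.2, hv1.1, hv1.2, hw1.1, hw1.2, h2.1, h2.2]

lemma hgb_cut (E : V → V → Prop) (hin : ∀ v, ∃ u, E u v) (a : V → V → ℝ) (r : V → ℝ)
    (hr0 : ∀ v, 0 ≤ r v)
    (hbal : ∀ v w, E v w → alphaR a r v w ≤ inMax E (alphaR a r) v)
    (hmin : ∀ r' : V → ℝ, (∀ v, 0 ≤ r' v) →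
      (∀ v w, E v w → ∃ u, E u v ∧ alphaR a r' v w ≤ alphaR a r' u v) → ∀ v, r v ≤ r' v)
    (D : Finset V) (hD : D.Nonempty) (hpos : ∀ u ∈ D, 0 < r u) :
    ∃ u ∈ D, (∃ w, E u w ∧ inMax E (alphaR a r) u ≤ alphaR a r u w) ∧
      ((∃ w, w ∉ D ∧ E u w ∧ inMax E (alphaR a r) u ≤ alphaR a r u w) ∨
        ∀ p ∈ D, E p u → alphaR a r p u < inMax E (alphaR a r) u) := by
  by_contra hcon
  push Not at hcon
  obtain ⟨ε, hε, h1, h2⟩ : ∃ ε : ℝ, 0 < ε ∧ (∀ u, 0 < r u → ε ≤ r u) ∧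
      ∀ u w, alphaR a r u w < inMax E (alphaR a r) u →
        alphaR a r u w + 2 * ε ≤ inMax E (alphaR a r) u := by
    have key : ∀ c : ℝ, 0 < c → ∀ᶠ ε in 𝓝[>] (0:ℝ), 2 * ε ≤ c := by
      intro c hc
      have : ∀ᶠ ε in 𝓝[>] (0:ℝ), ε < c / 2 :=
        mem_nhdsWithin_of_mem_nhds (Iio_mem_nhds (by linarith))
      filter_upwards [this] with ε h
      linarith
    have e0 : ∀ᶠ ε in 𝓝[>] (0:ℝ), 0 < ε := self_mem_nhdsWithin
    have e1 : ∀ᶠ ε in 𝓝[>] (0:ℝ), ∀ u, 0 < r u → 2 * ε ≤ r u := by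
      rw [Filter.eventually_all]
      intro u
      by_cases h : 0 < r u
      · filter_upwards [key _ h] with ε h' _ using h'
      · exact Filter.Eventually.of_forall fun ε h' => absurd h' h
    have e2 : ∀ᶠ ε in 𝓝[>] (0:ℝ), ∀ u w, alphaR a r u w < inMax E (alphaR a r) u →
        alphaR a r u w + 2 * ε ≤ inMax E (alphaR a r) u := by
      rw [Filter.eventually_all]
      intro u
      rw [Filter.eventually_all]
      intro w
      by_cases h : alphaR a r u w < inMax E (alphaR a r) u
      · filter_upwards [key _ (sub_pos.2 h)] with ε h' _
        linarith
      · exact Filter.Eventually.of_forall fun ε h' => absurd h' h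
    obtain ⟨ε, a0, a1, a2⟩ := (e0.and (e1.and e2)).exists
    exact ⟨ε, a0, fun u hu => by linarith [a1 u hu], a2⟩
  have hm := hmin (fun v => r v - if v ∈ D then ε else 0) ?_ ?_
  · obtain ⟨u, hu⟩ := hD
    have := hm u
    simp only [if_pos hu] at this
    linarith
  · intro v
    by_cases h : v ∈ D
    · simp only [if_pos h]
      linarith [h1 v (hpos v h)]
    · simp only [if_neg h]
      linarith [hr0 v]
  · intro v w hvw
    have hb := hbal v w hvw
    obtain ⟨p0, hp0, hp0'⟩ := hgb_ex_in E hin (alphaR a r) v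
    have hs := h2 v w
    have hi : ∀ x : V, 0 ≤ (if x ∈ D then ε else 0) ∧ (if x ∈ D then ε else 0) ≤ ε := by
      intro x; split_ifs <;> constructor <;> linarith
    by_cases hv : v ∈ D
    · by_cases hsl : ∃ w, E v w ∧ inMax E (alphaR a r) v ≤ alphaR a r v w
      · obtain ⟨w1, hw1, hw1'⟩ := hsl
        obtain ⟨ha, p, hp, hpv, hp'⟩ := hcon v hv ⟨w1, hw1, hw1'⟩
        refine ⟨p, hpv, ?_⟩
        by_cases hw : w ∈ D
        · simp only [alphaR, if_pos hv, if_pos hp, if_pos hw] at *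
          linarith
        · have hs := hs (ha w hw hvw)
          simp only [alphaR, if_pos hv, if_pos hp, if_neg hw] at *
          linarith
      · push Not at hsl
        have hs := hs (hsl w hvw)
        refine ⟨p0, hp0, ?_⟩
        have := hi w
        have := hi p0
        rw [hp0'] at hs
        simp only [alphaR, if_pos hv] at *
        linarith [(hi w).1, (hi p0).1]
    · refine ⟨p0, hp0, ?_⟩
      rw [hp0'] at hb
      simp only [alphaR, if_neg hv] at *
      linarith [(hi w).1, (hi p0).1]

lemma hgb_exit (E : V → V → Prop) (hin : ∀ v, ∃ u, E u v) (a : V → V → ℝ) (r : V → ℝ)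
    (hr0 : ∀ v, 0 ≤ r v)
    (hbal : ∀ v w, E v w → alphaR a r v w ≤ inMax E (alphaR a r) v)
    (hmin : ∀ r' : V → ℝ, (∀ v, 0 ≤ r' v) →
      (∀ v w, E v w → ∃ u, E u v ∧ alphaR a r' v w ≤ alphaR a r' u v) → ∀ v, r v ≤ r' v)
    (S : Finset V) (hpos : ∀ u ∈ S, 0 < r u) (x : ℝ)
    (hx : ∀ u ∈ S, inMax E (alphaR a r) u ≤ x) (D : Finset V) :
    D.Nonempty → (∀ u ∈ D, u ∈ S ∧ inMax E (alphaR a r) u = x) →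
    (∀ u ∈ D, ∀ w ∈ S, E u w → x ≤ alphaR a r u w → w ∈ D) →
    ∃ u ∈ S, ∃ w, w ∉ S ∧ E u w ∧ x ≤ alphaR a r u w := by
  induction D using Finset.strongInduction with
  | H D ih =>
    intro hne hD hcl
    by_contra hcon
    push Not at hcon
    obtain ⟨u, hu, ⟨w, hw, hw'⟩, h⟩ := hgb_cut E hin a r hr0 hbal hmin D hne
      (fun u hu => hpos u (hD u hu).1)
    rw [(hD u hu).2] at hw' h
    have hex : ∀ u ∈ D, ∀ w, E u w → x ≤ alphaR a r u w → w ∈ D := by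
      intro u hu w hw hw'
      by_cases hwS : w ∈ S
      · exact hcl u hu w hwS hw hw'
      · exact absurd hw' (not_le.2 (hcon u (hD u hu).1 w hwS hw))
    rcases h with ⟨w1, h1, h2, h3⟩ | h
    · exact h1 (hex u hu w1 h2 h3)
    · have hwD := hex u hu w hw hw'
      have hwu : w ≠ u := by
        rintro rfl
        exact absurd hw' (not_le.2 (h w hu hw))
      obtain ⟨u', hu', w', h1, h2, h3⟩ := ih (D.erase u) (Finset.erase_ssubset hu)
        ⟨w, Finset.mem_erase.2 ⟨hwu, hwD⟩⟩
        (fun q hq => hD q (Finset.mem_of_mem_erase hq))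
        (fun q hq z hz hqz hqz' => by
          have hqD := Finset.mem_of_mem_erase hq
          refine Finset.mem_erase.2 ⟨?_, hcl q hqD z hz hqz hqz'⟩
          rintro rfl
          exact absurd hqz' (not_le.2 (h q hqD hqz)))
      exact absurd h3 (not_le.2 (hcon u' hu' w' h1 h2))

lemma hgb_chain (E : V → V → Prop) (hin : ∀ v, ∃ u, E u v) (a : V → V → ℝ) (r : V → ℝ)
    (c x : ℝ) (hx : ∀ u, c < r u → inMax E (alphaR a r) u ≤ x) (n : ℕ) :
    ∀ u, c < r u → (Finset.univ.filter fun q => r u ≤ r q).card = n →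
      outMax E a u - x ≤ ∑ q ∈ Finset.univ.filter (fun q => r u ≤ r q), rhoR E a q := by
  induction n using Nat.strong_induction_on with
  | _ n ih =>
    intro u hu hn
    have hρ : ∀ q, 0 ≤ rhoR E a q := fun q => le_max_left _ _
    have h1 : outMax E a u - inMax E a u ≤ rhoR E a u := le_max_right _ _
    have humem : u ∈ Finset.univ.filter (fun q => r u ≤ r q) := by simp
    by_cases h : inMax E a u ≤ x
    · have := Finset.single_le_sum (f := rhoR E a) (fun q _ => hρ q) humem
      linarith
    · push Not at h
      obtain ⟨p, hp, hp'⟩ := hgb_ex_in E hin a u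
      have h2 := hgb_le_in E (alphaR a r) hp
      have h3 := hx u hu
      have hlt : r u < r p := by
        simp only [alphaR] at h2 h3
        linarith
      have hsub : insert u (Finset.univ.filter fun q => r p ≤ r q) ⊆
          Finset.univ.filter fun q => r u ≤ r q := by
        intro q hq
        rcases Finset.mem_insert.1 hq with rfl | hq
        · exact humem
        · simp only [Finset.mem_filter, Finset.mem_univ, true_and] at hq ⊢
          linarith
      have hnot : u ∉ Finset.univ.filter fun q => r p ≤ r q := by
        simpa using hlt
      have hcard := Finset.card_le_card hsub
      rw [Finset.card_insert_of_notMem hnot] at hcard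
      have h4 := ih _ (by omega) p (by linarith) rfl
      have h5 := Finset.sum_le_sum_of_subset_of_nonneg (f := rhoR E a) hsub (fun q _ _ => hρ q)
      rw [Finset.sum_insert hnot] at h5
      have h6 := hgb_le_out E a hp
      linarith

lemma hgb_gap (E : V → V → Prop) (hin : ∀ v, ∃ u, E u v) (a : V → V → ℝ) (r : V → ℝ)
    (hr0 : ∀ v, 0 ≤ r v)
    (hbal : ∀ v w, E v w → alphaR a r v w ≤ inMax E (alphaR a r) v)
    (hmin : ∀ r' : V → ℝ, (∀ v, 0 ≤ r' v) →
      (∀ v w, E v w → ∃ u, E u v ∧ alphaR a r' v w ≤ alphaR a r' u v) → ∀ v, r v ≤ r' v)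
    (v : V) (hne : (Finset.univ.filter fun u => r v < r u).Nonempty) :
    ∃ u, r v < r u ∧ r u - r v ≤ ∑ q ∈ Finset.univ.filter (fun q => r v < r q), rhoR E a q := by
  obtain ⟨m, hm, hmax⟩ := Finset.exists_max_image _ (fun u => inMax E (alphaR a r) u) hne
  simp only [Finset.mem_filter, Finset.mem_univ, true_and] at hm hmax
  set x := inMax E (alphaR a r) m with hxdef
  obtain ⟨u, hu, w, hw, huw, hxw⟩ := hgb_exit E hin a r hr0 hbal hmin
    (Finset.univ.filter fun u => r v < r u)
    (fun u hu => by
      simp only [Finset.mem_filter, Finset.mem_univ, true_and] at hu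
      linarith [hr0 v]) x
    (fun u hu => hmax u (by simpa using hu))
    (Finset.univ.filter fun u => r v < r u ∧ inMax E (alphaR a r) u = x)
    ⟨m, by simp [hm, hxdef]⟩
    (fun u hu => by simpa using hu)
    (fun u hu w hw huw hxw => by
      simp only [Finset.mem_filter, Finset.mem_univ, true_and] at hu hw ⊢
      exact ⟨hw, le_antisymm (hmax w hw) (hxw.trans (hgb_le_in E (alphaR a r) huw))⟩)
  simp only [Finset.mem_filter, Finset.mem_univ, true_and, not_lt] at hu hw
  refine ⟨u, hu, ?_⟩
  have h1 := hgb_chain E hin a r (r v) x hmax _ u hu rfl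
  have h2 := hgb_le_out E a huw
  have h3 : ∑ q ∈ Finset.univ.filter (fun q => r u ≤ r q), rhoR E a q ≤
      ∑ q ∈ Finset.univ.filter (fun q => r v < r q), rhoR E a q := by
    apply Finset.sum_le_sum_of_subset_of_nonneg
    · intro q hq
      simp only [Finset.mem_filter, Finset.mem_univ, true_and] at hq ⊢
      linarith
    · intro q _ _
      exact le_max_left _ _
  simp only [alphaR] at hxw
  linarith

lemma hgb_main (E : V → V → Prop) (hin : ∀ v, ∃ u, E u v) (a : V → V → ℝ) (r : V → ℝ)
    (hr0 : ∀ v, 0 ≤ r v)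
    (hbal : ∀ v w, E v w → alphaR a r v w ≤ inMax E (alphaR a r) v)
    (hmin : ∀ r' : V → ℝ, (∀ v, 0 ≤ r' v) →
      (∀ v w, E v w → ∃ u, E u v ∧ alphaR a r' v w ≤ alphaR a r' u v) → ∀ v, r v ≤ r' v)
    (m : V) (n : ℕ) : ∀ v, (Finset.univ.filter fun u => r v < r u).card = n →
    r m - r v ≤ (n : ℝ) * ∑ q ∈ Finset.univ.filter (fun q => r v < r q), rhoR E a q := by
  induction n using Nat.strong_induction_on with
  | _ n ih =>
    intro v hn
    have hρ : ∀ q, 0 ≤ rhoR E a q := fun q => le_max_left _ _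
    by_cases hne : (Finset.univ.filter fun u => r v < r u).Nonempty
    · obtain ⟨u, hu, hgap⟩ := hgb_gap E hin a r hr0 hbal hmin v hne
      have hsub : (Finset.univ.filter fun q => r u < r q) ⊆
          Finset.univ.filter fun q => r v < r q := by
        intro q hq
        simp only [Finset.mem_filter, Finset.mem_univ, true_and] at hq ⊢
        linarith
      have hlt : (Finset.univ.filter fun q => r u < r q).card < n := by
        rw [← hn]
        apply Finset.card_lt_card
        refine ⟨hsub, fun h => ?_⟩
        have := h (show u ∈ Finset.univ.filter fun q => r v < r q by simpa using hu)
        simp at this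
      have h1 := ih _ hlt u rfl
      have h5 := Finset.sum_le_sum_of_subset_of_nonneg (f := rhoR E a) hsub (fun q _ _ => hρ q)
      have h6 : 0 ≤ ∑ q ∈ Finset.univ.filter (fun q => r u < r q), rhoR E a q :=
        Finset.sum_nonneg fun q _ => hρ q
      have h7 : ((Finset.univ.filter fun q => r u < r q).card : ℝ) + 1 ≤ n := by
        exact_mod_cast hlt
      have h8 : (0:ℝ) ≤ (Finset.univ.filter fun q => r u < r q).card := by positivity
      nlinarith
    · have h1 : r m ≤ r v := by
        by_contra h
        exact hne ⟨m, by simpa using h⟩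
      have h6 : 0 ≤ ∑ q ∈ Finset.univ.filter (fun q => r v < r q), rhoR E a q :=
        Finset.sum_nonneg fun q _ => hρ q
      have : 0 ≤ (n : ℝ) * ∑ q ∈ Finset.univ.filter (fun q => r v < r q), rhoR E a q := by
        positivity
      linarith

end Helpers

open scoped Classical in
/-- `y_v − y_min ≤ |S_v| · ρ(S_v)`, where
`S_v = {u : y_u < y_v}` and `ρ(S_v) = ∑_{u ∈ S_v} ρ_u^R`. -/
theorem height_global_bound
    [Fintype V] [Nonempty V] [DecidableEq V] (E : V → V → Prop)
    (hout : ∀ v, ∃ w, E v w) (hin : ∀ v, ∃ u, E u v)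
    (hconn : ∀ u v : V, Relation.ReflTransGen E u v)
    (α : V → V → ℝ) (rstar : V → ℝ)
    (hrstar : ∀ σ : ℕ → V, Fair σ → ∀ v,
      Tendsto (fun t => rvec E α σ t v) atTop (nhds (rstar v)))
    (v : V) :
    height rstar v - Finset.univ.inf' Finset.univ_nonempty (height rstar) ≤
      ((Finset.univ.filter fun u => height rstar u < height rstar v).card : ℝ) *
        ∑ u ∈ Finset.univ.filter fun u => height rstar u < height rstar v,
          rhoR E α u := by
  obtain ⟨σ, hσ⟩ := hgb_fair (V := V)
  have hlim := hrstar σ hσ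
  have hr0 : ∀ v, 0 ≤ rstar v := fun v =>
    ge_of_tendsto' (hlim v) (fun t => hgb_nonneg E α σ t v)
  have hbal := hgb_bal E hin α σ hσ rstar hlim
  have hmin : ∀ r' : V → ℝ, (∀ v, 0 ≤ r' v) →
      (∀ v w, E v w → ∃ u, E u v ∧ alphaR α r' v w ≤ alphaR α r' u v) → ∀ v, rstar v ≤ r' v :=
    fun r' h0 h1 v => le_of_tendsto' (hlim v) (fun t => hgb_min E hout α σ r' h0 h1 t v)
  obtain ⟨m, _, hm⟩ := Finset.exists_mem_eq_inf' (Finset.univ_nonempty (α := V)) (height rstar)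
  have h := hgb_main E hin α rstar hr0 hbal hmin m _ v rfl
  rw [hm]
  simp only [height, neg_lt_neg_iff]
  have e : -rstar v - -rstar m = rstar m - rstar v := by ring
  rw [e]
  convert h using 2
end

section
/- If a non-trivial balancing operation at a vertex v transforms a graph function α into a graph function ᾱ, then ᾱ < α in the order on graph functions, i.e., there exists w with G_ᾱ^w ≠ G_α^w and for the largest such w the edge set of G_ᾱ^w is strictly contained in the edge set of G_α^w. -/
open Filter Topology

variable {V : Type*}

/-- The edge set of the threshold subgraph `G_β^w`: edges of weight at least `w`. -/
def edgesGe (E : V → V → Prop) (β : V → V → ℝ) (w : ℝ) : Set (V × V) :=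
  {p : V × V | E p.1 p.2 ∧ w ≤ β p.1 p.2}

/-- A non-trivial balancing operation at `v` is strictly decreasing
in the order on graph functions: there is a `w` at which the threshold subgraphs of
`ᾱ` and `α` differ, and at the largest such `w` the edge set of `G_ᾱ^w` is strictly
contained in that of `G_α^w`. -/
theorem balancing_strictly_decreasing
    [Fintype V] [Nonempty V] [DecidableEq V] (E : V → V → Prop)
    (hout : ∀ v, ∃ w, E v w) (hin : ∀ v, ∃ u, E u v)
    (hconn : ∀ u v : V, Relation.ReflTransGen E u v)
    (α : V → V → ℝ) (v : V) (hnt : outMax E α v ≠ inMax E α v) :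
    ∃ w : ℝ,
      edgesGe E (balanceAt E α v) w ≠ edgesGe E α w ∧
      (∀ w' : ℝ, w < w' → edgesGe E (balanceAt E α v) w' = edgesGe E α w') ∧
      edgesGe E (balanceAt E α v) w ⊂ edgesGe E α w := by
  have fo : Set.Finite {x : ℝ | ∃ w, E v w ∧ x = α v w} :=
    (Set.finite_range (fun w => α v w)).subset (by rintro x ⟨w, _, rfl⟩; exact ⟨w, rfl⟩)
  have fi : Set.Finite {x : ℝ | ∃ u, E u v ∧ x = α u v} :=
    (Set.finite_range (fun u => α u v)).subset (by rintro x ⟨w, _, rfl⟩; exact ⟨w, rfl⟩)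
  have no : Set.Nonempty {x : ℝ | ∃ w, E v w ∧ x = α v w} := by
    obtain ⟨w, hw⟩ := hout v
    exact ⟨_, w, hw, rfl⟩
  have ni : Set.Nonempty {x : ℝ | ∃ u, E u v ∧ x = α u v} := by
    obtain ⟨w, hw⟩ := hin v
    exact ⟨_, w, hw, rfl⟩
  have ho : ∀ w, E v w → α v w ≤ outMax E α v :=
    fun w hw => le_csSup fo.bddAbove ⟨w, hw, rfl⟩
  have hi : ∀ u, E u v → α u v ≤ inMax E α v :=
    fun w hw => le_csSup fi.bddAbove ⟨w, hw, rfl⟩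
  obtain ⟨x, hx, hxe⟩ : ∃ w, E v w ∧ outMax E α v = α v w := no.csSup_mem fo
  obtain ⟨y, hy, hye⟩ : ∃ u, E u v ∧ inMax E α v = α u v := ni.csSup_mem fi
  have key : ∃ M : ℝ, (∀ a b, E a b → balanceAt E α v a b = α a b ∨
      (balanceAt E α v a b < M ∧ α a b ≤ M)) ∧
      ∃ a b, E a b ∧ α a b = M ∧ balanceAt E α v a b < M := by
    generalize hB : balanceAt E α v = B
    have hB' : ∀ a b, B a b = α a b + (if b = v then (outMax E α v - inMax E α v) / 2 else 0)
          - (if a = v then (outMax E α v - inMax E α v) / 2 else 0) := by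
      intro a b; rw [← hB]; rfl
    generalize outMax E α v = O at *
    generalize inMax E α v = I at *
    have main : ∀ M, O ≤ M → I ≤ M → (O + I) / 2 < M → ∀ a b, E a b → B a b = α a b ∨
        (B a b < M ∧ α a b ≤ M) := by
      intro M h1 h2 h3 a b hab
      rw [hB']
      by_cases ha : a = v <;> by_cases hb : b = v
      · left; simp [ha, hb]
      · right
        subst ha
        have := ho b hab
        simp only [hb, if_true, if_false]
        constructor <;> linarith
      · right
        subst hb
        have := hi a hab
        simp only [ha, if_true, if_false]
        constructor <;> linarith
      · left; simp [ha, hb]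
    rcases lt_or_gt_of_ne hnt with h | h
    · refine ⟨I, main I h.le le_rfl (by linarith), y, v, hy, hye.symm, ?_⟩
      have hyv : y ≠ v := by
        rintro rfl
        have := ho y hy
        linarith
      rw [hB']
      simp only [hyv, if_true, if_false]
      linarith
    · refine ⟨O, main O le_rfl h.le (by linarith), v, x, hx, hxe.symm, ?_⟩
      have hxv : x ≠ v := by
        rintro rfl
        have := hi x hx
        linarith
      rw [hB']
      simp only [hxv, if_true, if_false]
      linarith
  obtain ⟨M, hM, a, b, hab, h1, h2⟩ := key
  have hss : edgesGe E (balanceAt E α v) M ⊂ edgesGe E α M := by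
    rw [Set.ssubset_iff_of_subset]
    · exact ⟨(a, b), ⟨hab, h1.ge⟩, fun h => absurd h.2 (not_le.mpr h2)⟩
    · rintro ⟨c, d⟩ ⟨hc, hw⟩
      refine ⟨hc, ?_⟩
      dsimp only at *
      rcases hM c d hc with h | h
      · rwa [← h]
      · linarith [h.1]
  refine ⟨M, hss.ne, ?_, hss⟩
  intro w' hw'
  ext ⟨c, d⟩
  simp only [edgesGe, Set.mem_setOf_eq]
  refine and_congr_right fun hc => ?_
  rcases hM c d hc with h | h
  · rw [h]
  · constructor <;> intro h' <;> linarith [h.1, h.2]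
end

section
/- Let α be a graph function, let m1 be the maximum edge weight of α, and let w1 be the minimum over all directed cycles of G of the average weight of the cycle under α. Then for every graph function α' obtained from α by any finite sequence of balancing operations and for every edge (u,v) of G, α'_{uv} ≥ w1 − (n−1)(m1 − w1). -/
open Filter Topology

variable {V : Type*}

theorem aux_pot [DecidableEq V] (E : V → V → Prop) (l : List V) : ∀ α : V → V → ℝ,
    ∃ P : V → ℝ, ∀ a b, balList E α l a b = α a b + P b - P a := by
  induction l with
  | nil => intro α; exact ⟨fun _ => 0, fun a b => by simp [balList]⟩
  | cons v l ih =>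
    intro α
    obtain ⟨P, hP⟩ := ih (balanceAt E α v)
    refine ⟨fun x => P x + (if x = v then (outMax E α v - inMax E α v) / 2 else 0), fun a b => ?_⟩
    simp only [balList, hP]
    simp only [balanceAt]
    ring

theorem aux_outMax_le [Fintype V] (E : V → V → Prop) (hout : ∀ v, ∃ w, E v w)
    (α : V → V → ℝ) (m : ℝ) (h : ∀ u v, E u v → α u v ≤ m) (v : V) : outMax E α v ≤ m := by
  obtain ⟨w, hw⟩ := hout v
  refine csSup_le ⟨_, w, hw, rfl⟩ ?_
  rintro x ⟨w, hw, rfl⟩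
  exact h _ _ hw

theorem aux_inMax_le [Fintype V] (E : V → V → Prop) (hin : ∀ v, ∃ u, E u v)
    (α : V → V → ℝ) (m : ℝ) (h : ∀ u v, E u v → α u v ≤ m) (v : V) : inMax E α v ≤ m := by
  obtain ⟨w, hw⟩ := hin v
  refine csSup_le ⟨_, w, hw, rfl⟩ ?_
  rintro x ⟨w, hw, rfl⟩
  exact h _ _ hw

theorem aux_le_outMax (E : V → V → Prop)
    (α : V → V → ℝ) (m : ℝ) (h : ∀ u v, E u v → α u v ≤ m) (v w : V) (e : E v w) :
    α v w ≤ outMax E α v := by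
  refine le_csSup ⟨m, ?_⟩ ⟨w, e, rfl⟩
  rintro x ⟨w, hw, rfl⟩
  exact h _ _ hw

theorem aux_le_inMax (E : V → V → Prop)
    (α : V → V → ℝ) (m : ℝ) (h : ∀ u v, E u v → α u v ≤ m) (v w : V) (e : E w v) :
    α w v ≤ inMax E α v := by
  refine le_csSup ⟨m, ?_⟩ ⟨w, e, rfl⟩
  rintro x ⟨w, hw, rfl⟩
  exact h _ _ hw

theorem aux_bal_le [Fintype V] [DecidableEq V] (E : V → V → Prop)
    (hout : ∀ v, ∃ w, E v w) (hin : ∀ v, ∃ u, E u v) (m : ℝ) (l : List V) :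
    ∀ α : V → V → ℝ, (∀ u v, E u v → α u v ≤ m) → ∀ u v, E u v → balList E α l u v ≤ m := by
  induction l with
  | nil => intro α h; exact h
  | cons x l ih =>
    intro α h
    simp only [balList]
    refine ih _ fun u v e => ?_
    have h1 := aux_outMax_le E hout α m h x
    have h2 := aux_inMax_le E hin α m h x
    have h3 := h u v e
    simp only [balanceAt]
    by_cases hv : v = x <;> by_cases hu : u = x
    · simp [hu, hv]; subst hu; subst hv; exact h3
    · subst hv
      have := aux_le_inMax E α m h v u e
      simp [hu]; linarith
    · subst hu
      have := aux_le_outMax E α m h u v e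
      simp [hv]; linarith
    · simp [hu, hv]; exact h3

theorem aux_path [Fintype V] (E : V → V → Prop) (u v : V) (h : Relation.ReflTransGen E u v) :
    ∃ (k : ℕ) (p : ℕ → V), k + 1 ≤ Fintype.card V ∧ p 0 = u ∧ p k = v ∧
      ∀ i < k, E (p i) (p (i + 1)) := by
  classical
  have hex : ∃ k, ∃ p : ℕ → V, p 0 = u ∧ p k = v ∧ ∀ i < k, E (p i) (p (i + 1)) := by
    induction h with
    | refl => exact ⟨0, fun _ => u, rfl, rfl, by simp⟩
    | @tail b c _ hbc ih =>
      obtain ⟨k, p, h0, hk, hp⟩ := ih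
      refine ⟨k + 1, fun i => if i ≤ k then p i else c, by simp [h0], by simp, ?_⟩
      intro i hi
      by_cases hik : i = k
      · subst hik; simpa [hk] using hbc
      · have : i < k := by omega
        simpa [this.le, this, Nat.succ_le_of_lt this] using hp i this
  obtain ⟨p, h0, hk, hp⟩ := Nat.find_spec hex
  have hmin := fun m => @Nat.find_min _ _ hex m
  generalize Nat.find hex = k at *
  refine ⟨k, p, ?_, h0, hk, hp⟩
  have hne : ∀ i j, i < j → j ≤ k → p i ≠ p j := by
    intro i j hij hjk he
    refine hmin (k - (j - i)) (by omega)
      ⟨fun m => if m ≤ i then p m else p (m + (j - i)), by simp [h0], ?_, ?_⟩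
    · by_cases hj : j = k
      · subst hj
        have : j - (j - i) = i := by omega
        simp [this, he, hk]
      · have h1 : ¬ (k - (j - i) ≤ i) := by omega
        have h2 : k - (j - i) + (j - i) = k := by omega
        simp only [h1, if_false, h2, hk]
    · intro m hm
      by_cases h1 : m + 1 ≤ i
      · have h2 : m ≤ i := by omega
        simp only [h1, h2, if_true]
        exact hp m (by omega)
      · by_cases h2 : m ≤ i
        · have h3 : m = i := by omega
          subst h3
          simp only [h1, le_refl, if_true, if_false, he]
          have h4 : m + 1 + (j - m) = j + 1 := by omega
          rw [h4]
          exact hp j (by omega)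
        · simp only [h1, h2, if_false]
          have h4 : m + 1 + (j - i) = m + (j - i) + 1 := by omega
          rw [h4]
          exact hp _ (by omega)
  have hinj : Function.Injective (fun i : Fin (k + 1) => p i) := by
    intro i j hij
    by_contra hc
    have hc' : (i : ℕ) ≠ j := fun h => hc (Fin.ext h)
    rcases lt_or_gt_of_ne hc' with h | h
    · exact hne i j h (by omega) hij
    · exact hne j i h (by omega) hij.symm
  simpa using Fintype.card_le_of_injective _ hinj

/-- With `m1` the maximum edge weight of `α` and `w1` the minimum
average weight of a directed cycle of `G` under `α`, every edge weight obtainable from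
`α` by a finite sequence of balancing operations is at least
`w1 − (n−1)(m1 − w1)`. -/
theorem edge_weights_bounded_below
    [Fintype V] [Nonempty V] [DecidableEq V] (E : V → V → Prop)
    (hout : ∀ v, ∃ w, E v w) (hin : ∀ v, ∃ u, E u v)
    (hconn : ∀ u v : V, Relation.ReflTransGen E u v)
    (α : V → V → ℝ) (m1 w1 : ℝ)
    (hm1 : IsGreatest {x : ℝ | ∃ u v, E u v ∧ x = α u v} m1)
    (hw1 : IsLeast {x : ℝ | ∃ (k : ℕ) (f : ZMod (k + 1) → V),
      (∀ i, E (f i) (f (i + 1))) ∧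
      x = (∑ i, α (f i) (f (i + 1))) / ((k : ℝ) + 1)} w1) :
    ∀ (l : List V) (u v : V), E u v →
      w1 - ((Fintype.card V : ℝ) - 1) * (m1 - w1) ≤ balList E α l u v := by
  intro l u v e
  obtain ⟨k, p, hk, h0, hpk, hp⟩ := aux_path E v u (hconn v u)
  have hαm : ∀ a b, E a b → α a b ≤ m1 := fun a b h => hm1.2 ⟨a, b, h, rfl⟩
  have hβm := aux_bal_le E hout hin m1 l α hαm
  obtain ⟨P, hP⟩ := aux_pot E l α
  have hwm : w1 ≤ m1 := by
    obtain ⟨k, f, hf, rfl⟩ := hw1.1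
    rw [div_le_iff₀ (by positivity)]
    refine (Finset.sum_le_sum fun i _ => hαm _ _ (hf i)).trans ?_
    simp [ZMod.card]
    linarith
  let f : ZMod (k + 1) → V := fun i => p (Fin.val (n := k + 1) i)
  have hs : ∀ i : Fin k, f ((Fin.castSucc i : Fin (k + 1)) + 1 : Fin (k + 1)) = p (i + 1) := by
    intro i
    have : ((Fin.castSucc i : Fin (k + 1)) + 1 : Fin (k + 1)) = i.succ := by simp
    rw [this]; rfl
  have hs0 : ∀ i : Fin k, f (Fin.castSucc i : Fin (k + 1)) = p i := fun i => rfl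
  have hl : f ((Fin.last k) + 1 : Fin (k + 1)) = v := by
    have : ((Fin.last k) + 1 : Fin (k + 1)) = 0 := by simp
    rw [this]; exact h0
  have hl0 : f (Fin.last k) = u := hpk
  have hf : ∀ i, E (f i) (f (i + 1)) := by
    intro i
    refine Fin.lastCases (motive := fun i : Fin (k + 1) => E (f i) (f (i + 1 : Fin (k + 1)))) ?_ ?_ i
    · rw [hl, hl0]; exact e
    · intro i
      rw [hs, hs0]; exact hp i i.2
  have hw := hw1.2 ⟨k, f, hf, rfl⟩
  rw [le_div_iff₀ (by positivity)] at hw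
  have hsum : ∑ i, α (f i) (f (i + 1)) = ∑ i, balList E α l (f i) (f (i + 1)) := by
    simp only [hP, Finset.sum_sub_distrib, Finset.sum_add_distrib]
    have := Equiv.sum_comp (Equiv.addRight (1 : ZMod (k + 1))) (fun i => P (f i))
    simp only [Equiv.coe_addRight] at this
    rw [this]; ring
  have hsum2 : ∑ i, balList E α l (f i) (f (i + 1))
      = ∑ i : Fin k, balList E α l (p i) (p (i + 1)) + balList E α l u v := by
    refine (Fin.sum_univ_castSucc (n := k)
      (fun i : Fin (k + 1) => balList E α l (f i) (f (i + 1 : Fin (k + 1))))).trans ?_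
    rw [hl, hl0]
    simp only [hs, hs0]
  have hsum3 : ∑ i : Fin k, balList E α l (p i) (p (i + 1)) ≤ k * m1 := by
    refine (Finset.sum_le_sum fun (i : Fin k) _ => hβm (p i) (p (i + 1)) (hp i i.2)).trans ?_
    simp
  have hkn : (k : ℝ) + 1 ≤ Fintype.card V := by exact_mod_cast hk
  have := mul_le_mul_of_nonneg_right (show (k : ℝ) ≤ Fintype.card V - 1 by linarith) (sub_nonneg.2 hwm)
  nlinarith
end

section
/- For any initial graph function α on a strongly connected directed graph G and any fair infinite sequence of balancing operations, the sequence α(t) of graph functions converges edgewise to a balanced graph function that is equivalent to α. -/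
open Filter Topology

variable {V : Type*}

/-! ### Walks -/

/-- total weight of the first `k` steps of `f` -/
noncomputable def wlkWt (a : V → V → ℝ) (f : ℕ → V) (k : ℕ) : ℝ :=
  ∑ i ∈ Finset.range k, a (f i) (f (i + 1))

/-- walk of length `k` whose interior lies in `U` -/
def IsWlk (E : V → V → Prop) (U : Set V) (f : ℕ → V) (k : ℕ) : Prop :=
  (∀ i, i < k → E (f i) (f (i + 1))) ∧ (∀ i, 0 < i → i < k → f i ∈ U)

theorem wlk_snoc {E : V → V → Prop} {U : Set V} (a : V → V → ℝ) {f : ℕ → V} {k : ℕ}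
    (h : IsWlk E U f k) (hk : f k ∈ U) {w : V} (hw : E (f k) w) :
    ∃ g, IsWlk E U g (k + 1) ∧ g 0 = f 0 ∧ g (k + 1) = w ∧
      wlkWt a g (k + 1) = wlkWt a f k + a (f k) w := by
  refine ⟨fun i => if i ≤ k then f i else w, ⟨?_, ?_⟩, by simp, by simp, ?_⟩
  · intro i hi
    by_cases h1 : i < k
    · have := h.1 i h1
      simp only [show i ≤ k by omega, show i + 1 ≤ k by omega, if_true]; exact this
    · obtain rfl : i = k := by omega
      simpa using hw
  · intro i h0 hi
    by_cases h1 : i < k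
    · simp only [show i ≤ k by omega, if_true]; exact h.2 i h0 h1
    · obtain rfl : i = k := by omega
      simpa using hk
  · unfold wlkWt
    rw [Finset.sum_range_succ]
    congr 1
    · apply Finset.sum_congr rfl
      intro i hi
      have := Finset.mem_range.1 hi
      simp only [show i ≤ k by omega, show i + 1 ≤ k by omega, if_true]
    · simp

theorem wlk_cons {E : V → V → Prop} {U : Set V} (a : V → V → ℝ) {f : ℕ → V} {k : ℕ}
    (h : IsWlk E U f k) (hk : f 0 ∈ U) {z : V} (hz : E z (f 0)) :
    ∃ g, IsWlk E U g (k + 1) ∧ g 0 = z ∧ g (k + 1) = f k ∧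
      wlkWt a g (k + 1) = wlkWt a f k + a z (f 0) := by
  refine ⟨fun i => if i = 0 then z else f (i - 1), ⟨?_, ?_⟩, by simp, by simp, ?_⟩
  · intro i hi
    rcases i with _ | i
    · simpa using hz
    · simpa using h.1 i (by omega)
  · intro i h0 hi
    rcases i with _ | i
    · omega
    · rcases i with _ | i
      · simpa using hk
      · simpa using h.2 (i + 1) (by omega) (by omega)
  · unfold wlkWt
    rw [Finset.sum_range_succ']
    simp

theorem wlk_butlast {E : V → V → Prop} {U : Set V} {f : ℕ → V} {k : ℕ}
    (h : IsWlk E U f (k + 1)) : IsWlk E U f k :=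
  ⟨fun i hi => h.1 i (by omega), fun i h0 hi => h.2 i h0 (by omega)⟩

theorem wlk_tail {E : V → V → Prop} {U : Set V} {f : ℕ → V} {k : ℕ}
    (h : IsWlk E U f (k + 1)) : IsWlk E U (fun i => f (i + 1)) k :=
  ⟨fun i hi => h.1 (i + 1) (by omega), fun i h0 hi => h.2 (i + 1) (by omega) (by omega)⟩

theorem wlkWt_succ (a : V → V → ℝ) (f : ℕ → V) (k : ℕ) :
    wlkWt a f (k + 1) = wlkWt a f k + a (f k) (f (k + 1)) := by
  unfold wlkWt; rw [Finset.sum_range_succ]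

theorem wlkWt_succ' (a : V → V → ℝ) (f : ℕ → V) (k : ℕ) :
    wlkWt a f (k + 1) = wlkWt a (fun i => f (i + 1)) k + a (f 0) (f 1) := by
  unfold wlkWt; rw [Finset.sum_range_succ']

theorem wlkWt_zero (a : V → V → ℝ) (f : ℕ → V) : wlkWt a f 0 = 0 := by
  simp [wlkWt]

theorem wlkWt_add (a : V → V → ℝ) (f : ℕ → V) (i j : ℕ) :
    wlkWt a f (i + j) = wlkWt a f i + wlkWt a (fun m => f (i + m)) j := by
  unfold wlkWt; rw [Finset.sum_range_add]; rfl

theorem wlkWt_congr (a : V → V → ℝ) {f g : ℕ → V} {k : ℕ} (h : ∀ i, i ≤ k → f i = g i) :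
    wlkWt a f k = wlkWt a g k := by
  unfold wlkWt
  apply Finset.sum_congr rfl
  intro i hi
  have := Finset.mem_range.1 hi
  rw [h i (by omega), h (i + 1) (by omega)]

/-- cutting out a closed piece -/
theorem wlk_cut {E : V → V → Prop} {U : Set V} (a : V → V → ℝ) {f : ℕ → V} {i d r : ℕ}
    (h : IsWlk E U f (i + d + r)) (hi : 0 < i) (hf : f i = f (i + d)) :
    ∃ g, IsWlk E U g (i + r) ∧ g 0 = f 0 ∧ g (i + r) = f (i + d + r) ∧
      wlkWt a f (i + d + r) = wlkWt a g (i + r) + wlkWt a (fun m => f (i + m)) d := by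
  set g : ℕ → V := fun m => if m ≤ i then f m else f (m + d) with hg
  have g1 : ∀ m, m ≤ i → g m = f m := fun m hm => by simp [hg, hm]
  have g2 : ∀ m, g (i + m) = f (i + d + m) := by
    intro m
    rcases m with _ | m
    · simp [hg, hf]
    · simp only [hg]
      rw [if_neg (by omega)]; congr 1; omega
  refine ⟨g, ⟨?_, ?_⟩, g1 0 (by omega), g2 r, ?_⟩
  · intro m hm
    by_cases hmi : m < i
    · rw [g1 m (by omega), g1 (m + 1) (by omega)]; exact h.1 m (by omega)
    · obtain ⟨x, rfl⟩ := Nat.exists_eq_add_of_le (not_lt.1 hmi)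
      rw [g2 x, add_assoc i x 1, g2 (x + 1)]
      exact h.1 (i + d + x) (by omega)
  · intro m h0 hm
    by_cases hmi : m < i
    · rw [g1 m (by omega)]; exact h.2 m h0 (by omega)
    · obtain ⟨x, rfl⟩ := Nat.exists_eq_add_of_le (not_lt.1 hmi)
      rw [g2 x]
      exact h.2 _ (by omega) (by omega)
  · rw [wlkWt_add, wlkWt_add, wlkWt_add a g, wlkWt_congr a g1]
    have : (fun m => g (i + m)) = fun m => f (i + d + m) := funext g2
    rw [this]; ring

theorem wlk_decomp [Fintype V] {E : V → V → Prop} {U : Set V} (a : V → V → ℝ) (X : ℝ)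
    (hc : ∀ k f, 1 ≤ k → k ≤ Fintype.card V + 1 → IsWlk E U f k → f 0 = f k → f 0 ∈ U →
      wlkWt a f k ≤ k * X) :
    ∀ k f, IsWlk E U f k → ∃ g k', IsWlk E U g k' ∧ k' ≤ Fintype.card V + 1 ∧ (1 ≤ k → 1 ≤ k') ∧
      g 0 = f 0 ∧ g k' = f k ∧ wlkWt a f k - k * X ≤ wlkWt a g k' - k' * X := by
  intro k
  induction k using Nat.strong_induction_on with
  | _ k ih =>
    intro f hf
    by_cases hk : k ≤ Fintype.card V + 1
    · exact ⟨f, k, hf, hk, id, rfl, rfl, le_rfl⟩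
    push Not at hk
    obtain ⟨x, y, hxy, hfxy⟩ := Fintype.exists_ne_map_eq_of_card_lt
      (fun i : Fin (Fintype.card V + 1) => f (i + 1)) (by simp)
    have hfxy : f (x + 1) = f (y + 1) := hfxy
    have key : ∃ i d : ℕ, 0 < i ∧ 0 < d ∧ i + d ≤ Fintype.card V + 1 ∧ f i = f (i + d) := by
      have hx := x.2
      have hy := y.2
      have hne : (x : ℕ) ≠ y := fun h => hxy (Fin.ext h)
      rcases lt_or_gt_of_ne hne with h | h
      · refine ⟨x + 1, y - x, by omega, by omega, by omega, ?_⟩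
        rw [hfxy]; congr 1; omega
      · refine ⟨y + 1, x - y, by omega, by omega, by omega, ?_⟩
        rw [← hfxy]; congr 1; omega
    obtain ⟨i, d, hi, hd, hid, hff⟩ := key
    obtain ⟨r, rfl⟩ := Nat.exists_eq_add_of_le (show i + d ≤ k by omega)
    have hr : 0 < r := by omega
    obtain ⟨g, hg, hg0, hg1, hgw⟩ := wlk_cut a hf hi hff
    have hcl := hc d (fun m => f (i + m)) hd (by omega)
      ⟨fun m hm => hf.1 (i + m) (by omega), fun m h0 hm => hf.2 (i + m) (by omega) (by omega)⟩
      (by simpa using hff) (by simpa using hf.2 i hi (by omega))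
    obtain ⟨g', k', h1, h2, h3, h4, h5, h6⟩ := ih (i + r) (by omega) g hg
    refine ⟨g', k', h1, h2, fun _ => h3 (by omega), h4.trans hg0, h5.trans hg1, le_trans ?_ h6⟩
    rw [hgw]; push_cast; linarith

/-! ### The abstract system -/

/-- slack on settled vertices -/
noncomputable def slk (U : Set V) (η : ℝ) (v : V) : ℝ := by
  classical exact if v ∈ U then 0 else η

theorem slk_of_mem {U : Set V} {η : ℝ} {v : V} (h : v ∈ U) : slk U η v = 0 := by
  simp [slk, h]
theorem slk_of_notMem {U : Set V} {η : ℝ} {v : V} (h : v ∉ U) : slk U η v = η := by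
  simp [slk, h]
theorem slk_le {U : Set V} {η : ℝ} (hη : 0 ≤ η) (v : V) : slk U η v ≤ η := by
  by_cases h : v ∈ U
  · rw [slk_of_mem h]; exact hη
  · rw [slk_of_notMem h]
theorem slk_nonneg {U : Set V} {η : ℝ} (hη : 0 ≤ η) (v : V) : 0 ≤ slk U η v := by
  by_cases h : v ∈ U
  · rw [slk_of_mem h]
  · rw [slk_of_notMem h]; exact hη

structure BSys (E : V → V → Prop) (a : V → V → ℝ) (U : Set V) (q : ℕ → V → ℝ) (σ : ℕ → V) :
    Prop where
  hS : ∀ v, v ∉ U → ∀ t, q t v = q 0 v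
  hE : ∀ u v, E u v → u ∈ U ∨ v ∈ U
  stay : ∀ t v, v ≠ σ t → q (t + 1) v = q t v
  up : ∀ η : ℝ, 0 < η → ∃ T, ∀ t, T ≤ t → σ t ∈ U → ∃ w, E (σ t) w ∧ ∀ z, E z (σ t) →
    2 * q (t + 1) (σ t) ≤ a (σ t) w + q t w + slk U η w + (q t z + slk U η z - a z (σ t))
  low : ∀ η : ℝ, 0 < η → ∃ T, ∀ t, T ≤ t → σ t ∈ U → ∃ z, E z (σ t) ∧ ∀ w, E (σ t) w →
    a (σ t) w + q t w - slk U η w + (q t z - slk U η z - a z (σ t)) ≤ 2 * q (t + 1) (σ t)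
  fair : Fair σ
  bd : ∃ D T, ∀ t, T ≤ t → ∀ u v, q t v - q t u ≤ D

/-- eventual bound for walks of length `k` -/
def EvB (E : V → V → Prop) (a : V → V → ℝ) (U : Set V) (q : ℕ → V → ℝ) (k : ℕ) (c : ℝ) : Prop :=
  ∀ ε : ℝ, 0 < ε → ∃ T, ∀ t, T ≤ t → ∀ f, IsWlk E U f k →
    wlkWt a f k + q t (f k) - q t (f 0) ≤ c + ε

/-- special walks: closed in `U`, or joining settled vertices -/
def SpW (E : V → V → Prop) (U : Set V) (f : ℕ → V) (k : ℕ) : Prop :=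
  IsWlk E U f k ∧ ((f 0 = f k ∧ f 0 ∈ U) ∨ (f 0 ∉ U ∧ f k ∉ U))

theorem fair_window [Fintype V] {σ : ℕ → V} (hσ : Fair σ) (T : ℕ) :
    ∃ T', ∀ v, ∃ τ, T ≤ τ ∧ τ < T' ∧ σ τ = v := by
  choose s hs hs' using fun v => hσ v T
  refine ⟨(Finset.univ.sup s) + 1, fun v => ⟨s v, hs v, ?_, hs' v⟩⟩
  exact Nat.lt_succ_of_le (Finset.le_sup (f := s) (Finset.mem_univ v))

theorem BSys.conv [Fintype V] {E : V → V → Prop} {a : V → V → ℝ} {U : Set V} {q : ℕ → V → ℝ}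
    {σ : ℕ → V} (h : BSys E a U q σ) {X : ℝ}
    (hX : ∀ k f, 1 ≤ k → SpW E U f k → wlkWt a f k + q 0 (f k) - q 0 (f 0) ≤ k * X)
    (m : ℕ) (c₁ c₂ c : ℝ) (h₁ : EvB E a U q m c₁) (h₂ : EvB E a U q (m + 2) c₂)
    (hc : ((m + 1 : ℕ) : ℝ) * X ≤ c) (hc' : (c₁ + c₂) / 2 ≤ c) : EvB E a U q (m + 1) c := by
  intro ε hε
  obtain ⟨T1, hT1⟩ := h₁ (ε / 4) (by linarith)
  obtain ⟨T2, hT2⟩ := h₂ (ε / 4) (by linarith)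
  obtain ⟨T3, hT3⟩ := h.up (ε / 4) (by linarith)
  obtain ⟨T4, hT4⟩ := h.low (ε / 4) (by linarith)
  set T := max (max T1 T2) (max T3 T4) with hT
  obtain ⟨T', hT'⟩ := fair_window h.fair T
  have hsl : ∀ v, slk U (ε / 4) v ≤ ε / 4 := fun v => slk_le (by linarith) v
  -- special walks
  have hsp : ∀ t f, SpW E U f (m + 1) →
      wlkWt a f (m + 1) + q t (f (m + 1)) - q t (f 0) ≤ c + ε := by
    intro t f hf
    have h0 := hX (m + 1) f (by omega) hf
    rcases hf.2 with ⟨h1, h2⟩ | ⟨h1, h2⟩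
    · rw [← h1] at h0 ⊢; linarith
    · rw [h.hS _ h1 t, h.hS _ h2 t]; linarith
  have main : ∀ t, T ≤ t → ∀ f, IsWlk E U f (m + 1) →
      (∃ τ, T ≤ τ ∧ τ < t ∧ ((σ τ = f 0 ∧ f 0 ∈ U) ∨ (σ τ = f (m + 1) ∧ f (m + 1) ∈ U))) →
      wlkWt a f (m + 1) + q t (f (m + 1)) - q t (f 0) ≤ c + ε := by
    intro t ht
    induction t, ht using Nat.le_induction with
    | base => rintro f hf ⟨τ, h1, h2, -⟩; omega
    | succ t ht ih =>
      rintro f hf ⟨τ, hτ1, hτ2, hτ⟩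
      by_cases hcl : f 0 = f (m + 1)
      · by_cases hU : f 0 ∈ U
        · exact hsp _ f ⟨hf, Or.inl ⟨hcl, hU⟩⟩
        · exact hsp _ f ⟨hf, Or.inr ⟨hU, hcl ▸ hU⟩⟩
      have ht1 : T1 ≤ t := by omega
      have ht2 : T2 ≤ t := by omega
      have ht3 : T3 ≤ t := by omega
      have ht4 : T4 ≤ t := by omega
      by_cases hend : σ t = f (m + 1) ∧ f (m + 1) ∈ U
      · obtain ⟨he, heU⟩ := hend
        obtain ⟨w, hw, hz⟩ := hT3 t ht3 (he ▸ heU)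
        rw [he] at hw hz
        have hz := hz (f m) (hf.1 m (by omega))
        obtain ⟨g, hg, hg0, hg1, hgw⟩ := wlk_snoc a hf heU hw
        have e1 := hT2 t ht2 g hg
        have e2 := hT1 t ht1 f (wlk_butlast hf)
        rw [h.stay t (f 0) (by rw [he]; exact hcl)]
        rw [hg0, hg1, hgw] at e1
        rw [wlkWt_succ] at e1 ⊢
        have := hsl w
        have := hsl (f m)
        linarith
      · by_cases hst : σ t = f 0 ∧ f 0 ∈ U
        · obtain ⟨he, heU⟩ := hst
          obtain ⟨z, hz, hw⟩ := hT4 t ht4 (he ▸ heU)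
          rw [he] at hw hz
          have hw := hw (f 1) (hf.1 0 (by omega))
          obtain ⟨g, hg, hg0, hg1, hgw⟩ := wlk_cons a hf heU hz
          have e1 := hT2 t ht2 g hg
          have e2 := hT1 t ht1 _ (wlk_tail hf)
          rw [h.stay t (f (m + 1)) (by rw [he]; exact Ne.symm hcl)]
          rw [hg0, hg1, hgw] at e1
          rw [wlkWt_succ'] at e1 ⊢
          have := hsl z
          have := hsl (f 1)
          simp only [zero_add] at e2
          linarith
        · have k1 : q (t + 1) (f 0) = q t (f 0) := by
            by_cases hU : f 0 ∈ U
            · exact h.stay t _ (fun hh => hst ⟨hh.symm, hU⟩)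
            · rw [h.hS _ hU, h.hS _ hU t]
          have k2 : q (t + 1) (f (m + 1)) = q t (f (m + 1)) := by
            by_cases hU : f (m + 1) ∈ U
            · exact h.stay t _ (fun hh => hend ⟨hh.symm, hU⟩)
            · rw [h.hS _ hU, h.hS _ hU t]
          rw [k1, k2]
          refine ih f hf ⟨τ, hτ1, ?_, hτ⟩
          rcases Nat.lt_succ_iff_lt_or_eq.1 hτ2 with h' | rfl
          · exact h'
          · rcases hτ with h' | h'
            · exact absurd h' hst
            · exact absurd h' hend
  refine ⟨max T T', fun t ht f hf => ?_⟩
  have hTt : T ≤ t := le_trans (le_max_left _ _) ht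
  have hTt' : T' ≤ t := le_trans (le_max_right _ _) ht
  by_cases h0 : f 0 ∈ U
  · obtain ⟨τ, h1, h2, h3⟩ := hT' (f 0)
    exact main t hTt f hf ⟨τ, h1, by omega, Or.inl ⟨h3, h0⟩⟩
  · by_cases h0' : f (m + 1) ∈ U
    · obtain ⟨τ, h1, h2, h3⟩ := hT' (f (m + 1))
      exact main t hTt f hf ⟨τ, h1, by omega, Or.inr ⟨h3, h0'⟩⟩
    · exact hsp t f ⟨hf, Or.inr ⟨h0, h0'⟩⟩

theorem convex_bdd_zero (G : ℕ → ℝ) (D : ℝ) (h0 : G 0 = 0) (hD : ∀ k, G k ≤ D)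
    (hc : ∀ k, 2 * G (k + 1) ≤ G k + G (k + 2)) : G 1 ≤ 0 := by
  by_contra hG
  push Not at hG
  have h1 : ∀ k, G 1 ≤ G (k + 1) - G k := by
    intro k
    induction k with
    | zero => simp [h0]
    | succ k ih => have := hc k; simp only [add_assoc] at *; norm_num at *; linarith
  have h2 : ∀ k : ℕ, k * G 1 ≤ G k := by
    intro k
    induction k with
    | zero => simp [h0]
    | succ k ih => have := h1 k; push_cast; linarith
  obtain ⟨n, hn⟩ := exists_nat_gt (D / G 1)
  rw [div_lt_iff₀ hG] at hn
  linarith [h2 n, hD n]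

theorem BSys.edge [Fintype V] {E : V → V → Prop} {a : V → V → ℝ} {U : Set V} {q : ℕ → V → ℝ}
    {σ : ℕ → V} (h : BSys E a U q σ) {X : ℝ}
    (hXs : ∀ k f, 1 ≤ k → k ≤ Fintype.card V + 1 → SpW E U f k →
      wlkWt a f k + q 0 (f k) - q 0 (f 0) ≤ k * X) :
    ∀ ε : ℝ, 0 < ε → ∃ T, ∀ t, T ≤ t → ∀ u v, E u v → a u v + q t v - q t u ≤ X + ε := by
  have hc : ∀ k f, 1 ≤ k → k ≤ Fintype.card V + 1 → IsWlk E U f k → f 0 = f k → f 0 ∈ U →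
      wlkWt a f k ≤ k * X := by
    intro k f h1 h2 h3 h4 h5
    have := hXs k f h1 h2 ⟨h3, Or.inl ⟨h4, h5⟩⟩
    rw [← h4] at this; linarith
  have hdec := wlk_decomp a X hc
  have hX : ∀ k f, 1 ≤ k → SpW E U f k → wlkWt a f k + q 0 (f k) - q 0 (f 0) ≤ k * X := by
    intro k f hk hf
    obtain ⟨g, k', h1, h2, h3, h4, h5, h6⟩ := hdec k f hf.1
    have := hXs k' g (h3 hk) h2 ⟨h1, by rw [h4, h5]; exact hf.2⟩
    rw [h4, h5] at this
    linarith
  obtain ⟨D, T0, hD⟩ := h.bd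
  set A : ℝ := ∑ u, ∑ v, |a u v| with hA
  have hAa : ∀ u v, a u v ≤ A := by
    intro u v
    refine (le_abs_self _).trans ?_
    refine (Finset.single_le_sum (f := fun v => |a u v|) (fun _ _ => abs_nonneg _)
      (Finset.mem_univ v)).trans ?_
    exact Finset.single_le_sum (f := fun u => ∑ v, |a u v|)
      (fun _ _ => Finset.sum_nonneg fun _ _ => abs_nonneg _) (Finset.mem_univ u)
  have hA0 : 0 ≤ A := Finset.sum_nonneg fun _ _ => Finset.sum_nonneg fun _ _ => abs_nonneg _
  have hwA : ∀ g : ℕ → V, ∀ k : ℕ, wlkWt a g k ≤ k * A := by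
    intro g k
    induction k with
    | zero => simp [wlkWt_zero]
    | succ k ih => rw [wlkWt_succ]; push_cast; linarith [hAa (g k) (g (k + 1))]
  set D' : ℝ := ((Fintype.card V + 1 : ℕ) : ℝ) * (A + |X|) + |D| with hD'
  have hD'0 : 0 ≤ D' := by positivity
  have hbd : ∀ k, EvB E a U q k (k * X + D') := by
    intro k ε hε
    refine ⟨T0, fun t ht f hf => ?_⟩
    obtain ⟨g, k', h1, h2, h3, h4, h5, h6⟩ := hdec k f hf
    have e1 := hwA g k'
    have e2 : (k' : ℝ) * (A + |X|) ≤ ((Fintype.card V + 1 : ℕ) : ℝ) * (A + |X|) := by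
      apply mul_le_mul_of_nonneg_right _ (by positivity)
      exact_mod_cast h2
    have e3 : -(k' * X) ≤ k' * |X| := by
      have := mul_le_mul_of_nonneg_left (neg_le_abs X) (Nat.cast_nonneg (α := ℝ) k')
      linarith
    have e4 := hD t ht (f 0) (f k)
    have e5 := le_abs_self D
    linarith
  set G : ℕ → ℝ := fun k => sInf {c | 0 ≤ c ∧ EvB E a U q k (k * X + c)} with hG
  have hne : ∀ k, {c | 0 ≤ c ∧ EvB E a U q k (k * X + c)}.Nonempty := fun k => ⟨D', hD'0, hbd k⟩
  have hbb : ∀ k, BddBelow {c | 0 ≤ c ∧ EvB E a U q k (k * X + c)} :=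
    fun k => ⟨0, fun c hc => hc.1⟩
  have hG0 : ∀ k, 0 ≤ G k := fun k => le_csInf (hne k) fun c hc => hc.1
  have hGE : ∀ k, EvB E a U q k (k * X + G k) := by
    intro k ε hε
    obtain ⟨c, hc1, hc2⟩ := exists_lt_of_csInf_lt (hne k) (show G k < G k + ε / 2 by linarith)
    obtain ⟨T, hT⟩ := hc1.2 (ε / 2) (by linarith)
    exact ⟨T, fun t ht f hf => by have := hT t ht f hf; linarith⟩
  have hG1 : G 1 ≤ 0 := by
    apply convex_bdd_zero G D'
    · refine le_antisymm (csInf_le (hbb 0) ⟨le_rfl, ?_⟩) (hG0 0)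
      intro ε hε
      exact ⟨0, fun t _ f _ => by simp [wlkWt_zero]; linarith⟩
    · exact fun k => csInf_le (hbb k) ⟨hD'0, hbd k⟩
    · intro k
      have : G (k + 1) ≤ (G k + G (k + 2)) / 2 := by
        have p1 := hG0 k
        have p2 := hG0 (k + 2)
        refine csInf_le (hbb _) ⟨by linarith, ?_⟩
        refine h.conv hX k _ _ _ (hGE k) (hGE (k + 2)) ?_ ?_
        · linarith
        · push_cast; linarith
      linarith
  intro ε hε
  obtain ⟨T, hT⟩ := hGE 1 ε hε
  refine ⟨T, fun t ht u v huv => ?_⟩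
  have := hT t ht (fun i => if i = 0 then u else v)
    ⟨fun i hi => by obtain rfl : i = 0 := by omega
                    simpa using huv, fun i h0 hi => by omega⟩
  simp [wlkWt] at this
  linarith

theorem BSys.drift_up [Fintype V] {E : V → V → Prop} {a : V → V → ℝ} {U : Set V} {q : ℕ → V → ℝ}
    {σ : ℕ → V} (h : BSys E a U q σ) {X : ℝ}
    (hev : ∀ ε : ℝ, 0 < ε → ∃ T, ∀ t, T ≤ t → ∀ k f, IsWlk E U f k →
      wlkWt a f k + q t (f k) - q t (f 0) ≤ k * X + ε)
    (f₀ : ℕ → V) (k₀ : ℕ) (hw₀ : IsWlk E U f₀ (k₀ + 1)) (hc₀ : f₀ 0 = f₀ (k₀ + 1))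
    (hwt : wlkWt a f₀ (k₀ + 1) = ((k₀ + 1 : ℕ) : ℝ) * X) :
    ∀ ε : ℝ, 0 < ε → ∃ T, ∀ s, T ≤ s → ∀ t, s ≤ t → q t (f₀ 0) ≤ q s (f₀ 0) + ε := by
  intro ε hε
  obtain ⟨T1, hT1⟩ := hev (ε / 2) (by linarith)
  obtain ⟨T2, hT2⟩ := h.up (ε / 2) (by linarith)
  refine ⟨max T1 T2, fun s hs => ?_⟩
  have main : ∀ t, s ≤ t → ∀ k f, IsWlk E U f k → f 0 = f₀ 0 →
      wlkWt a f k - k * X + (q t (f k) + slk U (ε / 2) (f k)) ≤ q s (f₀ 0) + ε := by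
    intro t ht
    induction t, ht using Nat.le_induction with
    | base =>
      intro k f hf hf0
      have := hT1 s (by omega) k f hf
      have := slk_le (U := U) (show 0 ≤ ε / 2 by linarith) (f k)
      rw [hf0] at *
      linarith
    | succ t ht ih =>
      have pos : ∀ k f, IsWlk E U f (k + 1) → f 0 = f₀ 0 →
        wlkWt a f (k + 1) - ((k + 1 : ℕ) : ℝ) * X +
          (q (t + 1) (f (k + 1)) + slk U (ε / 2) (f (k + 1))) ≤ q s (f₀ 0) + ε := by
        intro k f hf hf0
        by_cases hx : f (k + 1) = σ t ∧ f (k + 1) ∈ U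
        · obtain ⟨he, heU⟩ := hx
          obtain ⟨w, hw, hz⟩ := hT2 t (by omega) (he ▸ heU)
          rw [← he] at hw hz
          have hz := hz (f k) (hf.1 k (by omega))
          obtain ⟨g, hg, hg0, hg1, hgw⟩ := wlk_snoc a hf heU hw
          have e1 := ih _ g hg (hg0.trans hf0)
          have e2 := ih _ f (wlk_butlast hf) hf0
          rw [hg1, hgw] at e1
          rw [slk_of_mem heU]
          rw [wlkWt_succ] at e1 ⊢
          push_cast at *
          linarith
        · have : q (t + 1) (f (k + 1)) = q t (f (k + 1)) := by
            by_cases hU : f (k + 1) ∈ U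
            · exact h.stay t _ (fun hh => hx ⟨hh, hU⟩)
            · rw [h.hS _ hU, h.hS _ hU t]
          rw [this]
          exact ih _ f hf hf0
      intro k f hf hf0
      rcases k with _ | k
      · have := pos k₀ f₀ hw₀ rfl
        rw [hwt, ← hc₀] at this
        rw [wlkWt_zero, hf0]
        simp; linarith
      · exact pos k f hf hf0
  intro t ht
  have := main t ht 0 f₀ ⟨fun i hi => by omega, fun i h0 hi => by omega⟩ rfl
  have e := slk_nonneg (U := U) (show 0 ≤ ε / 2 by linarith) (f₀ 0)
  rw [wlkWt_zero] at this
  simp at this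
  linarith

theorem BSys.drift_low [Fintype V] {E : V → V → Prop} {a : V → V → ℝ} {U : Set V} {q : ℕ → V → ℝ}
    {σ : ℕ → V} (h : BSys E a U q σ) {X : ℝ}
    (hev : ∀ ε : ℝ, 0 < ε → ∃ T, ∀ t, T ≤ t → ∀ k f, IsWlk E U f k →
      wlkWt a f k + q t (f k) - q t (f 0) ≤ k * X + ε)
    (f₀ : ℕ → V) (k₀ : ℕ) (hw₀ : IsWlk E U f₀ (k₀ + 1)) (hc₀ : f₀ 0 = f₀ (k₀ + 1))
    (hwt : wlkWt a f₀ (k₀ + 1) = ((k₀ + 1 : ℕ) : ℝ) * X) :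
    ∀ ε : ℝ, 0 < ε → ∃ T, ∀ s, T ≤ s → ∀ t, s ≤ t → q s (f₀ 0) ≤ q t (f₀ 0) + ε := by
  intro ε hε
  obtain ⟨T1, hT1⟩ := hev (ε / 2) (by linarith)
  obtain ⟨T2, hT2⟩ := h.low (ε / 2) (by linarith)
  refine ⟨max T1 T2, fun s hs => ?_⟩
  have main : ∀ t, s ≤ t → ∀ k f, IsWlk E U f k → f k = f₀ 0 →
      wlkWt a f k - k * X - (q t (f 0) - slk U (ε / 2) (f 0)) ≤ - q s (f₀ 0) + ε := by
    intro t ht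
    induction t, ht using Nat.le_induction with
    | base =>
      intro k f hf hf0
      have := hT1 s (by omega) k f hf
      have := slk_le (U := U) (show 0 ≤ ε / 2 by linarith) (f 0)
      rw [hf0] at *
      linarith
    | succ t ht ih =>
      have pos : ∀ k f, IsWlk E U f (k + 1) → f (k + 1) = f₀ 0 →
        wlkWt a f (k + 1) - ((k + 1 : ℕ) : ℝ) * X -
          (q (t + 1) (f 0) - slk U (ε / 2) (f 0)) ≤ - q s (f₀ 0) + ε := by
        intro k f hf hf0
        by_cases hx : f 0 = σ t ∧ f 0 ∈ U
        · obtain ⟨he, heU⟩ := hx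
          obtain ⟨z, hz, hw⟩ := hT2 t (by omega) (he ▸ heU)
          rw [← he] at hw hz
          have hw := hw (f 1) (hf.1 0 (by omega))
          obtain ⟨g, hg, hg0, hg1, hgw⟩ := wlk_cons a hf heU hz
          have e1 := ih _ g hg (hg1.trans hf0)
          have e2 := ih _ _ (wlk_tail hf) hf0
          rw [hg0, hgw] at e1
          rw [slk_of_mem heU]
          rw [wlkWt_succ'] at e1 ⊢
          simp only [zero_add] at e2
          push_cast at *
          linarith
        · have : q (t + 1) (f 0) = q t (f 0) := by
            by_cases hU : f 0 ∈ U
            · exact h.stay t _ (fun hh => hx ⟨hh, hU⟩)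
            · rw [h.hS _ hU, h.hS _ hU t]
          rw [this]
          exact ih _ f hf hf0
      intro k f hf hf0
      rcases k with _ | k
      · have := pos k₀ f₀ hw₀ hc₀.symm
        rw [hwt] at this
        rw [wlkWt_zero, hf0]
        simp; linarith
      · exact pos k f hf hf0
  intro t ht
  have := main t ht 0 f₀ ⟨fun i hi => by omega, fun i h0 hi => by omega⟩ rfl
  have e := slk_nonneg (U := U) (show 0 ≤ ε / 2 by linarith) (f₀ 0)
  rw [wlkWt_zero] at this
  simp at this
  linarith

theorem BSys.evAll [Fintype V] {E : V → V → Prop} {a : V → V → ℝ} {U : Set V} {q : ℕ → V → ℝ}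
    {X : ℝ}
    (hc : ∀ k f, 1 ≤ k → k ≤ Fintype.card V + 1 → IsWlk E U f k → f 0 = f k → f 0 ∈ U →
      wlkWt a f k ≤ k * X)
    (hedge : ∀ ε : ℝ, 0 < ε → ∃ T, ∀ t, T ≤ t → ∀ u v, E u v → a u v + q t v - q t u ≤ X + ε) :
    ∀ ε : ℝ, 0 < ε → ∃ T, ∀ t, T ≤ t → ∀ k f, IsWlk E U f k →
      wlkWt a f k + q t (f k) - q t (f 0) ≤ k * X + ε := by
  intro ε hε
  have hN : (0 : ℝ) < ((Fintype.card V + 1 : ℕ) : ℝ) := by positivity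
  obtain ⟨T, hT⟩ := hedge (ε / ((Fintype.card V + 1 : ℕ) : ℝ)) (by positivity)
  refine ⟨T, fun t ht k f hf => ?_⟩
  set δ := ε / ((Fintype.card V + 1 : ℕ) : ℝ) with hδ
  have hδ0 : 0 < δ := by positivity
  have hδN : ((Fintype.card V + 1 : ℕ) : ℝ) * δ = ε := by rw [hδ]; field_simp
  obtain ⟨g, k', h1, h2, h3, h4, h5, h6⟩ := wlk_decomp a X hc k f hf
  have : ∀ j, j ≤ k' → wlkWt a g j + q t (g j) - q t (g 0) ≤ j * X + j * δ := by
    intro j hj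
    induction j with
    | zero => simp [wlkWt_zero]
    | succ j ih =>
      have := hT t ht _ _ (h1.1 j (by omega))
      have := ih (by omega)
      rw [wlkWt_succ]; push_cast; linarith
  have e := this k' le_rfl
  have e2 : (k' : ℝ) * δ ≤ ((Fintype.card V + 1 : ℕ) : ℝ) * δ := by
    apply mul_le_mul_of_nonneg_right _ hδ0.le
    exact_mod_cast h2
  rw [h4, h5] at e
  linarith

theorem BSys.exists_conv [Fintype V] {E : V → V → Prop} {a : V → V → ℝ} {U : Set V}
    {q : ℕ → V → ℝ} {σ : ℕ → V} (h : BSys E a U q σ) (hU : U.Nonempty) :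
    ∃ v ∈ U, ∃ L, Tendsto (fun t => q t v) atTop (𝓝 L) := by
  set N := Fintype.card V + 1 with hN
  set A : Set ℝ := {x | ∃ k f, 1 ≤ k ∧ k ≤ N ∧ SpW E U f k ∧
    x = (wlkWt a f k + q 0 (f k) - q 0 (f 0)) / k} with hA
  have hfin : A.Finite := by
    refine (Set.finite_range (fun x : Fin (N + 1) × (Fin (N + 1) → V) =>
      (wlkWt a (fun i => x.2 (Fin.ofNat (N + 1) i)) x.1 + q 0 (x.2 (Fin.ofNat (N + 1) x.1))
        - q 0 (x.2 (Fin.ofNat (N + 1) 0))) / (x.1 : ℕ))).subset ?_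
    rintro x ⟨k, f, h1, h2, -, rfl⟩
    refine ⟨(⟨k, by omega⟩, fun i => f i), ?_⟩
    have hm : ∀ i, i ≤ k → f ((Fin.ofNat (N + 1) i : Fin (N + 1)) : ℕ) = f i := by
      intro i hi
      congr 1
      exact Nat.mod_eq_of_lt (by omega)
    simp only
    rw [wlkWt_congr a hm, hm k le_rfl, hm 0 (by omega)]
  have hmono : ∀ X, (∀ x ∈ A, x ≤ X) → ∀ k f, 1 ≤ k → k ≤ N → SpW E U f k →
      wlkWt a f k + q 0 (f k) - q 0 (f 0) ≤ k * X := by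
    intro X hX k f h1 h2 h3
    have := hX _ ⟨k, f, h1, h2, h3, rfl⟩
    have hk : (0 : ℝ) < k := by exact_mod_cast h1
    rw [div_le_iff₀ hk] at this
    linarith
  have hAne : A.Nonempty := by
    by_contra hemp
    rw [Set.not_nonempty_iff_eq_empty] at hemp
    obtain ⟨u, hu⟩ := hU
    obtain ⟨T1, hT1⟩ := h.up 1 one_pos
    obtain ⟨t1, ht1, hs⟩ := h.fair u T1
    obtain ⟨w, hw, -⟩ := hT1 t1 ht1 (hs ▸ hu)
    rw [hs] at hw
    obtain ⟨D, T0, hD⟩ := h.bd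
    obtain ⟨T, hT⟩ := h.edge (X := a u w - D - 2) (hmono _ (by rw [hemp]; simp)) 1 one_pos
    have e1 := hT (max T T0) (le_max_left _ _) u w hw
    have e2 := hD (max T T0) (le_max_right _ _) w u
    linarith
  obtain ⟨X, hXA, hXm⟩ := Set.exists_max_image A id hfin hAne
  have hXs := hmono X hXm
  have hedge := h.edge hXs
  obtain ⟨k, f, hk1, hkN, hsp, hXeq⟩ := hXA
  have hk0 : (0 : ℝ) < k := by exact_mod_cast hk1
  have hval : wlkWt a f k + q 0 (f k) - q 0 (f 0) = k * X := by
    rw [hXeq]; field_simp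
  rcases hsp.2 with ⟨hcl, hfU⟩ | ⟨h0, hk⟩
  · refine ⟨f 0, hfU, ?_⟩
    have hc : ∀ k f, 1 ≤ k → k ≤ Fintype.card V + 1 → IsWlk E U f k → f 0 = f k → f 0 ∈ U →
        wlkWt a f k ≤ k * X := by
      intro k f h1 h2 h3 h4 h5
      have := hXs k f h1 h2 ⟨h3, Or.inl ⟨h4, h5⟩⟩
      rw [← h4] at this; linarith
    have hev := BSys.evAll hc hedge
    obtain ⟨k₀, rfl⟩ := Nat.exists_eq_add_of_le' hk1
    have hwt : wlkWt a f (k₀ + 1) = ((k₀ + 1 : ℕ) : ℝ) * X := by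
      rw [← hcl] at hval; linarith
    have hu := h.drift_up hev f k₀ hsp.1 hcl hwt
    have hl := h.drift_low hev f k₀ hsp.1 hcl hwt
    apply cauchySeq_tendsto_of_complete
    rw [Metric.cauchySeq_iff']
    intro ε hε
    obtain ⟨T1, hT1⟩ := hu (ε / 2) (by linarith)
    obtain ⟨T2, hT2⟩ := hl (ε / 2) (by linarith)
    refine ⟨max T1 T2, fun n hn => ?_⟩
    have e1 := hT1 _ (le_max_left T1 T2) n hn
    have e2 := hT2 _ (le_max_right T1 T2) n hn
    rw [Real.dist_eq, abs_lt]
    constructor <;> linarith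
  · have hE01 := hsp.1.1 0 (by omega)
    have h1U : f 1 ∈ U := (h.hE _ _ hE01).resolve_left h0
    refine ⟨f 1, h1U, q 0 (f 0) + X - a (f 0) (f 1), ?_⟩
    obtain ⟨m, rfl⟩ := Nat.exists_eq_add_of_le' hk1
    rw [Metric.tendsto_atTop]
    intro ε hε
    have hm : (0 : ℝ) < m + 2 := by positivity
    obtain ⟨T, hT⟩ := hedge (ε / (m + 2)) (by positivity)
    set δ := ε / ((m : ℝ) + 2) with hδ
    have hδ0 : 0 < δ := by positivity
    have hδN : ((m : ℝ) + 2) * δ = ε := by rw [hδ]; field_simp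
    refine ⟨T, fun t ht => ?_⟩
    have e1 := hT t ht _ _ hE01
    simp only [zero_add] at e1
    have e2 : ∀ j, j ≤ m → wlkWt a (fun i => f (i + 1)) j + q t (f (j + 1)) - q t (f 1)
        ≤ j * X + j * δ := by
      intro j hj
      induction j with
      | zero => simp [wlkWt_zero]
      | succ j ih =>
        have := hT t ht _ _ (hsp.1.1 (j + 1) (by omega))
        have := ih (by omega)
        rw [wlkWt_succ]; push_cast; linarith
    have e3 := e2 m le_rfl
    rw [wlkWt_succ'] at hval
    rw [h.hS _ hk t] at e3
    rw [h.hS _ h0 t] at e1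
    push_cast at hval
    have hmδ : 0 ≤ (m : ℝ) * δ := by positivity
    rw [Real.dist_eq, abs_lt]
    constructor <;> linarith

/-! ### The balancing dynamics -/

theorem outMax_spec [Fintype V] {E : V → V → Prop} (hout : ∀ v, ∃ w, E v w) (α : V → V → ℝ)
    (v : V) : (∃ w, E v w ∧ outMax E α v = α v w) ∧ ∀ w, E v w → α v w ≤ outMax E α v := by
  have hfin : {x : ℝ | ∃ w, E v w ∧ x = α v w}.Finite := by
    refine (Set.finite_range (fun w => α v w)).subset ?_
    rintro x ⟨w, -, rfl⟩
    exact ⟨w, rfl⟩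
  have hne : {x : ℝ | ∃ w, E v w ∧ x = α v w}.Nonempty := by
    obtain ⟨w, hw⟩ := hout v
    exact ⟨_, w, hw, rfl⟩
  exact ⟨hne.csSup_mem hfin, fun w hw => le_csSup hfin.bddAbove ⟨w, hw, rfl⟩⟩

theorem inMax_spec [Fintype V] {E : V → V → Prop} (hin : ∀ v, ∃ u, E u v) (α : V → V → ℝ)
    (v : V) : (∃ u, E u v ∧ inMax E α v = α u v) ∧ ∀ u, E u v → α u v ≤ inMax E α v :=
  outMax_spec (E := fun a b => E b a) hin (fun a b => α b a) v

/-- cumulative shift of each vertex -/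
noncomputable def potP [DecidableEq V] (E : V → V → Prop) (α : V → V → ℝ) (σ : ℕ → V) :
    ℕ → V → ℝ
  | 0 => fun _ => 0
  | t + 1 => fun u => potP E α σ t u +
      (if u = σ t then
        (outMax E (balIter E α σ t) (σ t) - inMax E (balIter E α σ t) (σ t)) / 2 else 0)

theorem balIter_eq [DecidableEq V] (E : V → V → Prop) (α : V → V → ℝ) (σ : ℕ → V) (t : ℕ)
    (x y : V) : balIter E α σ t x y = α x y + potP E α σ t y - potP E α σ t x := by
  induction t with
  | zero => simp [balIter, potP]
  | succ t ih => simp only [balIter, balanceAt, potP, ih]; ring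

theorem pot_conv [Fintype V] {E : V → V → Prop} (a : V → V → ℝ) (σ : ℕ → V) (hσ : Fair σ)
    (hconn : ∀ u v : V, Relation.ReflTransGen E u v) (p : ℕ → V → ℝ)
    (stay : ∀ t v, v ≠ σ t → p (t + 1) v = p t v)
    (up : ∀ t, ∃ w, E (σ t) w ∧ ∀ z, E z (σ t) →
      2 * p (t + 1) (σ t) ≤ a (σ t) w + p t w + (p t z - a z (σ t)))
    (low : ∀ t, ∃ z, E z (σ t) ∧ ∀ w, E (σ t) w →
      a (σ t) w + p t w + (p t z - a z (σ t)) ≤ 2 * p (t + 1) (σ t)) :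
    ∀ v, ∃ L, Tendsto (fun t => p t v) atTop (𝓝 L) := by
  classical
  -- edge weights stay bounded above
  obtain ⟨M, hM⟩ : ∃ M, ∀ t u v, E u v → a u v + p t v - p t u ≤ M := by
    obtain ⟨M, hM⟩ : ∃ M, ∀ x : V × V, a x.1 x.2 + p 0 x.2 - p 0 x.1 ≤ M := by
      obtain ⟨M, hM⟩ := (Set.finite_range
        (fun x : V × V => a x.1 x.2 + p 0 x.2 - p 0 x.1)).bddAbove
      exact ⟨M, fun x => hM ⟨x, rfl⟩⟩
    refine ⟨M, fun t => ?_⟩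
    induction t with
    | zero => exact fun u v _ => hM (u, v)
    | succ t ih =>
      intro u v huv
      by_cases huv' : u = v
      · subst huv'; have := ih u u huv; linarith
      by_cases hv : v = σ t
      · obtain ⟨w, hw, hz⟩ := up t
        rw [stay t u (by rw [← hv]; exact huv')]
        rw [← hv] at hw hz
        have e1 := hz u huv
        have e2 := ih v w hw
        have e3 := ih u v huv
        linarith
      · rw [stay t v hv]
        by_cases hu : u = σ t
        · obtain ⟨z, hz, hw⟩ := low t
          rw [← hu] at hw hz
          have e1 := hw v huv
          have e2 := ih z u hz
          have e3 := ih u v huv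
          linarith
        · rw [stay t u hu]; exact ih u v huv
  have hdiff : ∀ u v, ∃ C, ∀ t, p t v - p t u ≤ C := by
    intro u v
    induction hconn u v with
    | refl => exact ⟨0, fun t => by simp⟩
    | tail _ hbc ih =>
      obtain ⟨C, hC⟩ := ih
      rename_i b c _
      exact ⟨C + M - a b c, fun t => by have := hC t; have := hM t b c hbc; linarith⟩
  choose C hC using hdiff
  obtain ⟨D, hD⟩ : ∃ D, ∀ t u v, p t v - p t u ≤ D := by
    obtain ⟨D, hD⟩ := (Set.finite_range (fun x : V × V => C x.1 x.2)).bddAbove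
    exact ⟨D, fun t u v => (hC u v t).trans (hD ⟨(u, v), rfl⟩)⟩
  by_contra hcon
  push Not at hcon
  set U : Set V := {v | ¬ ∃ L, Tendsto (fun t => p t v) atTop (𝓝 L)} with hUdef
  have hUne : U.Nonempty := by
    obtain ⟨v, hv⟩ := hcon
    exact ⟨v, fun ⟨L, hL⟩ => hv L hL⟩
  have hP : ∀ v, ∃ L, v ∉ U → Tendsto (fun t => p t v) atTop (𝓝 L) := by
    intro v
    by_cases hv : v ∈ U
    · exact ⟨0, fun h => absurd hv h⟩
    · obtain ⟨L, hL⟩ := not_not.1 hv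
      exact ⟨L, fun _ => hL⟩
  choose P hP using hP
  set q : ℕ → V → ℝ := fun t v => if v ∈ U then p t v else P v with hq
  have qU : ∀ t v, v ∈ U → q t v = p t v := fun t v hv => by simp only [hq, if_pos hv]
  have qS : ∀ t v, v ∉ U → q t v = P v := fun t v hv => by simp only [hq, if_neg hv]
  have happ : ∀ η : ℝ, 0 < η → ∃ T, ∀ t, T ≤ t → ∀ v,
      p t v ≤ q t v + slk U η v ∧ q t v - slk U η v ≤ p t v := by
    intro η hη
    rw [← eventually_atTop (p := fun t => ∀ v,
      p t v ≤ q t v + slk U η v ∧ q t v - slk U η v ≤ p t v), eventually_all]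
    intro v
    by_cases hv : v ∈ U
    · refine Eventually.of_forall fun t => ?_
      rw [qU t v hv, slk_of_mem hv]; simp
    · obtain ⟨T, hT⟩ := Metric.tendsto_atTop.1 (hP v hv) η hη
      refine eventually_atTop.2 ⟨T, fun t ht => ?_⟩
      have := hT t ht
      rw [Real.dist_eq, abs_lt] at this
      rw [qS t v hv, slk_of_notMem hv]
      constructor <;> linarith
  have hsys : BSys (fun u v => E u v ∧ (u ∈ U ∨ v ∈ U)) a U q σ := by
    refine ⟨?_, fun u v h => h.2, ?_, ?_, ?_, hσ, ?_⟩
    · intro v hv t; rw [qS _ _ hv, qS _ _ hv]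
    · intro t v hv
      by_cases hU : v ∈ U
      · rw [qU _ _ hU, qU _ _ hU, stay t v hv]
      · rw [qS _ _ hU, qS _ _ hU]
    · intro η hη
      obtain ⟨T, hT⟩ := happ η hη
      refine ⟨T, fun t ht hs => ?_⟩
      obtain ⟨w, hw, hz⟩ := up t
      refine ⟨w, ⟨hw, Or.inl hs⟩, fun z hz' => ?_⟩
      rw [qU _ _ hs]
      have := hz z hz'.1
      have := (hT t ht w).1
      have := (hT t ht z).1
      linarith
    · intro η hη
      obtain ⟨T, hT⟩ := happ η hη
      refine ⟨T, fun t ht hs => ?_⟩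
      obtain ⟨z, hz, hw⟩ := low t
      refine ⟨z, ⟨hz, Or.inr hs⟩, fun w hw' => ?_⟩
      rw [qU _ _ hs]
      have := hw w hw'.1
      have := (hT t ht w).2
      have := (hT t ht z).2
      linarith
    · obtain ⟨T, hT⟩ := happ 1 one_pos
      refine ⟨D + 2, T, fun t ht u v => ?_⟩
      have := (hT t ht v).2
      have := (hT t ht u).1
      have := hD t u v
      have := slk_le (U := U) (zero_le_one (α := ℝ)) u
      have := slk_le (U := U) (zero_le_one (α := ℝ)) v
      linarith
  obtain ⟨v, hv, L, hL⟩ := hsys.exists_conv hUne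
  refine hv ⟨L, ?_⟩
  have : (fun t => p t v) = fun t => q t v := funext fun t => (qU t v hv).symm
  rw [this]; exact hL

theorem outMax_close [Fintype V] {E : V → V → Prop} (hout : ∀ v, ∃ w, E v w) {α β : V → V → ℝ}
    {ε : ℝ} (h : ∀ u v, |α u v - β u v| ≤ ε) (v : V) : |outMax E α v - outMax E β v| ≤ ε := by
  obtain ⟨⟨w, hw, e1⟩, h1⟩ := outMax_spec hout α v
  obtain ⟨⟨w', hw', e2⟩, h2⟩ := outMax_spec hout β v
  have := h1 w' hw'
  have := h2 w hw
  have := abs_le.1 (h v w)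
  have := abs_le.1 (h v w')
  rw [abs_le]
  constructor <;> linarith

theorem inMax_close [Fintype V] {E : V → V → Prop} (hin : ∀ v, ∃ u, E u v) {α β : V → V → ℝ}
    {ε : ℝ} (h : ∀ u v, |α u v - β u v| ≤ ε) (v : V) : |inMax E α v - inMax E β v| ≤ ε :=
  outMax_close (E := fun a b => E b a) hin (α := fun a b => α b a) (β := fun a b => β b a)
    (fun u v => h v u) v

/-- For any initial graph function on a strongly connected graph and
any fair infinite sequence of balancing operations, the iterates converge edgewise to
a balanced graph function equivalent to the initial one. -/
theorem fair_balancing_converges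
    [Fintype V] [Nonempty V] [DecidableEq V] (E : V → V → Prop)
    (hout : ∀ v, ∃ w, E v w) (hin : ∀ v, ∃ u, E u v)
    (hconn : ∀ u v : V, Relation.ReflTransGen E u v)
    (α : V → V → ℝ) (σ : ℕ → V) (hσ : Fair σ) :
    ∃ β : V → V → ℝ, IsBalancedGF E β ∧ Equivalent E α β ∧
      ∀ u v, E u v → Tendsto (fun t => balIter E α σ t u v) atTop (nhds (β u v)) := by
  have up : ∀ t, ∃ w, E (σ t) w ∧ ∀ z, E z (σ t) → 2 * potP E α σ (t + 1) (σ t) ≤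
      α (σ t) w + potP E α σ t w + (potP E α σ t z - α z (σ t)) := by
    intro t
    obtain ⟨⟨w, hw, e1⟩, -⟩ := outMax_spec hout (balIter E α σ t) (σ t)
    obtain ⟨-, h2⟩ := inMax_spec hin (balIter E α σ t) (σ t)
    refine ⟨w, hw, fun z hz => ?_⟩
    have e2 := h2 z hz
    rw [balIter_eq] at e1 e2
    simp only [potP, if_true]
    linarith
  have low : ∀ t, ∃ z, E z (σ t) ∧ ∀ w, E (σ t) w →
      α (σ t) w + potP E α σ t w + (potP E α σ t z - α z (σ t)) ≤
        2 * potP E α σ (t + 1) (σ t) := by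
    intro t
    obtain ⟨-, h2⟩ := outMax_spec hout (balIter E α σ t) (σ t)
    obtain ⟨⟨z, hz, e1⟩, -⟩ := inMax_spec hin (balIter E α σ t) (σ t)
    refine ⟨z, hz, fun w hw => ?_⟩
    have e2 := h2 w hw
    rw [balIter_eq] at e1 e2
    simp only [potP, if_true]
    linarith
  have stay : ∀ t v, v ≠ σ t → potP E α σ (t + 1) v = potP E α σ t v := by
    intro t v hv
    simp [potP, hv]
  choose P hP using pot_conv α σ hσ hconn (potP E α σ) stay up low
  have hlim : ∀ u v, Tendsto (fun t => balIter E α σ t u v) atTop (𝓝 (α u v + P v - P u)) := by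
    intro u v
    simp only [balIter_eq]
    exact ((hP v).const_add _).sub (hP u)
  refine ⟨fun u v => α u v + P v - P u, ?_, ?_, fun u v _ => hlim u v⟩
  · intro v
    apply eq_of_abs_sub_le_all
    intro ε hε
    have hε4 : 0 < ε / 6 := by linarith
    have ev1 : ∀ᶠ t in atTop, ∀ x y, |balIter E α σ t x y - (α x y + P y - P x)| ≤ ε / 6 := by
      rw [eventually_all]; intro x
      rw [eventually_all]; intro y
      filter_upwards [Metric.tendsto_nhds.1 (hlim x y) _ hε4] with t ht
      rw [Real.dist_eq] at ht
      exact ht.le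
    have ev2 : ∀ᶠ t in atTop, |potP E α σ t v - P v| ≤ ε / 6 := by
      filter_upwards [Metric.tendsto_nhds.1 (hP v) _ hε4] with t ht
      rw [Real.dist_eq] at ht
      exact ht.le
    obtain ⟨T, hT⟩ := eventually_atTop.1 (ev1.and ev2)
    obtain ⟨t, ht, hs⟩ := hσ v T
    have c1 := abs_le.1 (outMax_close hout (hT t ht).1 v)
    have c2 := abs_le.1 (inMax_close hin (hT t ht).1 v)
    have c3 := abs_le.1 (hT t ht).2
    have c4 := abs_le.1 (hT (t + 1) (by omega)).2
    have c5 : potP E α σ (t + 1) v = potP E α σ t v +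
        (outMax E (balIter E α σ t) v - inMax E (balIter E α σ t) v) / 2 := by
      simp [potP, hs]
    rw [abs_le]
    constructor <;> linarith
  · intro k f _
    have : ∑ i, P (f (i + 1)) = ∑ i, P (f i) :=
      Equiv.sum_comp (Equiv.addRight (1 : ZMod (k + 1))) (fun i => P (f i))
    simp only [Finset.sum_sub_distrib, Finset.sum_add_distrib, this]
    ring
end
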